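/- arXiv:1303.1770 — 4 statements merged into one kernel-verified Lean document; each statement's English description precedes it below -/
import Mathlib

section
/- Let E : 𝒜 → L(H) be a POVM and f : Ω → [0,∞) a measurable function such that F̃ := {φ ∈ H : ∫ f dE_{φ,φ} < ∞} is dense in H. Then f is E_{ψ,φ}-integrable for all ψ, φ ∈ F̃, and the sesquilinear form q(ψ,φ) := ∫ f dE_{ψ,φ} on F̃ × F̃ is positive, symmetric, and closed: whenever (φ_n) is a sequence in F̃ with φ_n → φ in H and q(φ_n − φ_m, φ_n − φ_m) → 0 as n, m → ∞, then φ ∈ F̃ and q(φ_n − φ, φ_n − φ) → 0 as n → ∞. -/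
/-!
For `φ ∈ H` the complex measure `E_{φ,φ}` is a finite positive measure (`POVM.diag`), and `f` is
integrable for it iff the extended quadratic form `POVM.energy f φ = ∫ f dE_{φ,φ} ∈ [0, ∞]` is
finite. Positivity of `E(X)` gives `|Re⟨ψ, E(X)φ⟩|, |Im⟨ψ, E(X)φ⟩| ≤ E_{ψ,ψ}(X) + E_{φ,φ}(X)`,
so the variation of `E_{ψ,φ}` is dominated by `2 (E_{ψ,ψ} + E_{φ,φ})`: this is the integrability
claim. Symmetry follows from that of the operators `E(X)`.

Closedness rests on the lower semicontinuity of `POVM.energy f`: it is a supremum of integrals of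
simple functions, and `φ ↦ E_{φ,φ}(X)` is continuous for each measurable `X`. Letting `m → ∞` in
`energy (φ_n - φ_m) ≤ ε` therefore yields `energy (φ_n - φ) ≤ ε`. In particular `φ_n - φ` lies in
the form domain for some `n`, and so does `φ`, because the domain is stable under subtraction.
-/

open MeasureTheory ComplexConjugate Filter
open scoped ComplexInnerProductSpace ENNReal NNReal

/-- Integral of a complex-valued function with respect to a signed measure, defined via the
Jordan decomposition. -/
noncomputable def smIntegral {Ω : Type*} [MeasurableSpace Ω] (s : SignedMeasure Ω)
    (f : Ω → ℂ) : ℂ :=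
  (∫ ω, f ω ∂s.toJordanDecomposition.posPart) - ∫ ω, f ω ∂s.toJordanDecomposition.negPart

/-- The total variation control measure of a complex measure (the sum of the total variations
of the real and imaginary parts; a function is integrable for this measure iff it is integrable
for the total variation measure `|ν|`, and for a positive measure it coincides with it). -/
noncomputable def cmVariation {Ω : Type*} [MeasurableSpace Ω] (ν : ComplexMeasure Ω) :
    Measure Ω :=
  (ComplexMeasure.re ν).totalVariation + (ComplexMeasure.im ν).totalVariation

/-- `f` is integrable with respect to the complex measure `ν`, i.e. `∫ |f| d|ν| < ∞`. -/
def CMIntegrable {Ω : Type*} [MeasurableSpace Ω] (ν : ComplexMeasure Ω) (f : Ω → ℂ) : Prop :=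
  Integrable f (cmVariation ν)

/-- The integral `∫ f dν` of a complex function with respect to a complex measure, via the
Jordan decompositions of the real and imaginary parts of `ν`. -/
noncomputable def cmIntegral {Ω : Type*} [MeasurableSpace Ω] (ν : ComplexMeasure Ω)
    (f : Ω → ℂ) : ℂ :=
  smIntegral (ComplexMeasure.re ν) f + Complex.I * smIntegral (ComplexMeasure.im ν) f

/-- The complex measure `X ↦ ⟨y, μ(X)⟩` associated with a Hilbert space valued vector
measure `μ` and a vector `y`. -/
noncomputable def vmInner {Ω : Type*} [MeasurableSpace Ω] {H : Type*} [NormedAddCommGroup H]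
    [InnerProductSpace ℂ H] (μ : VectorMeasure Ω H) (y : H) : ComplexMeasure Ω :=
  μ.mapRange (innerSL ℂ y).toLinearMap.toAddMonoidHom (innerSL ℂ y).continuous

/-- A positive operator (valued) measure: `op X` are the operators `E(X)`, and `cm ψ φ` is the
complex measure `E_{ψ,φ} : X ↦ ⟨ψ, E(X)φ⟩`. -/
structure POVM (Ω : Type*) [MeasurableSpace Ω] (H : Type*) [NormedAddCommGroup H]
    [InnerProductSpace ℂ H] where
  op : Set Ω → H →L[ℂ] H
  cm : H → H → MeasureTheory.ComplexMeasure Ω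
  cm_apply : ∀ (ψ φ : H) (X : Set Ω), MeasurableSet X → cm ψ φ X = ⟪ψ, op X φ⟫
  pos : ∀ (φ : H) (X : Set Ω), MeasurableSet X →
    0 ≤ (⟪φ, op X φ⟫ : ℂ).re ∧ (⟪φ, op X φ⟫ : ℂ).im = 0

namespace POVM

variable {Ω : Type*} [MeasurableSpace Ω] {H : Type*} [NormedAddCommGroup H]
  [InnerProductSpace ℂ H]

/-- The positive measure `E_{φ,φ}`, realised as the variation of the complex measure
`E.cm φ φ`. -/
noncomputable def diag (E : POVM Ω H) (φ : H) : Measure Ω := cmVariation (E.cm φ φ)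

lemma re_cm_apply (E : POVM Ω H) (ψ φ : H) {X : Set Ω} (hX : MeasurableSet X) :
    ComplexMeasure.re (E.cm ψ φ) X = (⟪ψ, E.op X φ⟫ : ℂ).re := by
  rw [← E.cm_apply ψ φ X hX]; rfl

lemma im_cm_apply (E : POVM Ω H) (ψ φ : H) {X : Set Ω} (hX : MeasurableSet X) :
    ComplexMeasure.im (E.cm ψ φ) X = (⟪ψ, E.op X φ⟫ : ℂ).im := by
  rw [← E.cm_apply ψ φ X hX]; rfl

/-- The operators `E(X)` are symmetric, since their quadratic form is real and `H` is complex. -/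
lemma op_symm (E : POVM Ω H) (ψ φ : H) {X : Set Ω} (hX : MeasurableSet X) :
    (⟪ψ, E.op X φ⟫ : ℂ) = conj (⟪φ, E.op X ψ⟫ : ℂ) := by
  have hs : (E.op X : H →ₗ[ℂ] H).IsSymmetric := by
    rw [LinearMap.isSymmetric_iff_inner_map_self_real]
    intro v
    have h := (E.pos v X hX).2
    rw [Complex.conj_eq_iff_im, ← inner_conj_symm, Complex.conj_im]
    simpa using h
  rw [inner_conj_symm]
  exact (hs ψ φ).symm

lemma im_cm_self (E : POVM Ω H) (φ : H) : ComplexMeasure.im (E.cm φ φ) = 0 := by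
  ext X hX
  rw [E.im_cm_apply φ φ hX, (E.pos φ X hX).2]; rfl

lemma diag_eq (E : POVM Ω H) (φ : H) :
    E.diag φ = (ComplexMeasure.re (E.cm φ φ)).totalVariation := by
  simp [diag, cmVariation, E.im_cm_self φ, SignedMeasure.totalVariation_zero]

/-- The real part of `E.cm φ φ` comes from a finite positive measure, which is then both its
total variation and the positive part of its Jordan decomposition. -/
lemma exists_diag (E : POVM Ω H) (φ : H) : ∃ _ : IsFiniteMeasure (E.diag φ),
    ComplexMeasure.re (E.cm φ φ) = (E.diag φ).toSignedMeasure := by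
  have h0 : VectorMeasure.restrict 0 Set.univ ≤
      VectorMeasure.restrict (ComplexMeasure.re (E.cm φ φ)) Set.univ := by
    rw [VectorMeasure.le_restrict_univ_iff_le]
    intro X hX
    rw [E.re_cm_apply φ φ hX]
    exact (E.pos φ X hX).1
  have h1 := SignedMeasure.toMeasureOfZeroLE_toSignedMeasure _ h0
  have h2 : E.diag φ = SignedMeasure.toMeasureOfZeroLE _ Set.univ MeasurableSet.univ h0 := by
    rw [diag_eq, SignedMeasure.totalVariation_eq_variation]
    conv_lhs => rw [← h1]
    exact Measure.variation_toSignedMeasure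
  have h3 : IsFiniteMeasure (E.diag φ) := by rw [h2]; infer_instance
  refine ⟨h3, ?_⟩
  rw [← h1]
  congr 1
  exact h2.symm

lemma diag_apply (E : POVM Ω H) (φ : H) {X : Set Ω} (hX : MeasurableSet X) :
    E.diag φ X = ENNReal.ofReal (⟪φ, E.op X φ⟫ : ℂ).re := by
  obtain ⟨_, h⟩ := E.exists_diag φ
  rw [← E.re_cm_apply φ φ hX, h, Measure.toSignedMeasure_apply_measurable hX, Measure.real,
    ENNReal.ofReal_toReal (measure_ne_top _ _)]

/-- Expanding `0 ≤ ⟨ψ ± φ, E(X)(ψ ± φ)⟩` bounds the mixed term by the diagonal ones. -/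
lemma abs_re_le (E : POVM Ω H) (ψ φ : H) {X : Set Ω} (hX : MeasurableSet X) :
    |(⟪ψ, E.op X φ⟫ : ℂ).re| ≤ (⟪ψ, E.op X ψ⟫ : ℂ).re + (⟪φ, E.op X φ⟫ : ℂ).re := by
  have h1 := (E.pos (ψ + φ) X hX).1
  have h2 := (E.pos (ψ - φ) X hX).1
  have h3 := (E.pos ψ X hX).1
  have h4 := (E.pos φ X hX).1
  have h5 : (⟪φ, E.op X ψ⟫ : ℂ).re = (⟪ψ, E.op X φ⟫ : ℂ).re := by
    rw [E.op_symm ψ φ hX, Complex.conj_re]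
  simp only [map_add, map_sub, inner_add_left, inner_add_right, inner_sub_left, inner_sub_right,
    Complex.add_re, Complex.sub_re, h5] at h1 h2
  rw [abs_le]
  constructor <;> linarith

lemma abs_im_le (E : POVM Ω H) (ψ φ : H) {X : Set Ω} (hX : MeasurableSet X) :
    |(⟪ψ, E.op X φ⟫ : ℂ).im| ≤ (⟪ψ, E.op X ψ⟫ : ℂ).re + (⟪φ, E.op X φ⟫ : ℂ).re := by
  have h := E.abs_re_le ψ (Complex.I • φ) hX
  have h2 : (⟪Complex.I • φ, E.op X (Complex.I • φ)⟫ : ℂ) = ⟪φ, E.op X φ⟫ := by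
    rw [map_smul, inner_smul_left, inner_smul_right, ← mul_assoc]
    simp
  rw [h2, map_smul, inner_smul_right] at h
  simpa using h

lemma diag_add_apply (E : POVM Ω H) (ψ φ : H) {X : Set Ω} (hX : MeasurableSet X) :
    (E.diag ψ + E.diag φ) X =
      ENNReal.ofReal ((⟪ψ, E.op X ψ⟫ : ℂ).re + (⟪φ, E.op X φ⟫ : ℂ).re) := by
  rw [Measure.add_apply, E.diag_apply ψ hX, E.diag_apply φ hX,
    ENNReal.ofReal_add (E.pos ψ X hX).1 (E.pos φ X hX).1]

lemma cmVariation_le (E : POVM Ω H) (ψ φ : H) :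
    cmVariation (E.cm ψ φ) ≤ (E.diag ψ + E.diag φ) + (E.diag ψ + E.diag φ) := by
  unfold cmVariation
  rw [SignedMeasure.totalVariation_eq_variation, SignedMeasure.totalVariation_eq_variation]
  refine add_le_add ?_ ?_ <;> refine VectorMeasure.variation_le_of_forall_enorm_le fun X hX => ?_
  · rw [E.diag_add_apply ψ φ hX, E.re_cm_apply ψ φ hX, Real.enorm_eq_ofReal_abs]
    exact ENNReal.ofReal_le_ofReal (E.abs_re_le ψ φ hX)
  · rw [E.diag_add_apply ψ φ hX, E.im_cm_apply ψ φ hX, Real.enorm_eq_ofReal_abs]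
    exact ENNReal.ofReal_le_ofReal (E.abs_im_le ψ φ hX)

/-- A consequence of the parallelogram law for the form of `E(X)`. -/
lemma diag_sub_le (E : POVM Ω H) (ψ φ : H) :
    E.diag (ψ - φ) ≤ (E.diag ψ + E.diag φ) + (E.diag ψ + E.diag φ) := by
  refine Measure.le_intro fun X hX _ => ?_
  have h3 := (E.pos ψ X hX).1
  have h4 := (E.pos φ X hX).1
  have h1 := (E.pos (ψ + φ) X hX).1
  rw [Measure.add_apply, E.diag_add_apply ψ φ hX, E.diag_apply _ hX,
    ← ENNReal.ofReal_add (by linarith) (by linarith)]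
  refine ENNReal.ofReal_le_ofReal ?_
  simp only [map_add, map_sub, inner_add_left, inner_add_right, inner_sub_left, inner_sub_right,
    Complex.add_re, Complex.sub_re] at h1 ⊢
  linarith

/-- The quadratic form `∫ f dE_{φ,φ}` with values in `[0, ∞]`, for `f ≥ 0`. -/
noncomputable def energy (E : POVM Ω H) (f : Ω → ℝ) (φ : H) : ℝ≥0∞ :=
  ∫⁻ ω, ENNReal.ofReal (f ω) ∂E.diag φ

/-- Each `φ ↦ E_{φ,φ}(X)` is continuous, so `energy`, a supremum of integrals of simple
functions, is lower semicontinuous. -/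
lemma lowerSemicontinuous_energy (E : POVM Ω H) (f : Ω → ℝ) :
    LowerSemicontinuous (E.energy f) := by
  unfold energy
  simp_rw [lintegral_eq_nnreal]
  refine lowerSemicontinuous_biSup fun g _ => Continuous.lowerSemicontinuous ?_
  simp_rw [SimpleFunc.map_lintegral]
  refine continuous_finsetSum _ fun c _ => ?_
  refine (ENNReal.continuous_const_mul ENNReal.coe_ne_top).comp ?_
  simp_rw [E.diag_apply _ (g.measurableSet_fiber c)]
  exact ENNReal.continuous_ofReal.comp (by fun_prop)

variable {f : Ω → ℝ}

lemma integrable_iff_energy (E : POVM Ω H) (hf : Measurable f) (hpos : ∀ ω, 0 ≤ f ω) (φ : H) :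
    CMIntegrable (E.cm φ φ) (fun ω => (f ω : ℂ)) ↔ E.energy f φ < ∞ := by
  change Integrable _ (E.diag φ) ↔ _
  have : AEStronglyMeasurable (fun ω => (f ω : ℂ)) (E.diag φ) :=
    (Complex.measurable_ofReal.comp hf).aestronglyMeasurable
  rw [Integrable, and_iff_right this, hasFiniteIntegral_iff_norm, energy]
  simp [abs_of_nonneg (hpos _)]

lemma smIntegral_ofReal (s : SignedMeasure Ω) (f : Ω → ℝ) :
    conj (smIntegral s (fun ω => (f ω : ℂ))) = smIntegral s (fun ω => (f ω : ℂ)) := by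
  simp only [smIntegral, integral_complex_ofReal, ← Complex.ofReal_sub, Complex.conj_ofReal]

lemma smIntegral_neg (s : SignedMeasure Ω) (g : Ω → ℂ) :
    smIntegral (-s) g = -smIntegral s g := by
  simp [smIntegral, SignedMeasure.toJordanDecomposition_neg]

lemma smIntegral_toSignedMeasure (μ : Measure Ω) [IsFiniteMeasure μ] (g : Ω → ℂ) :
    smIntegral μ.toSignedMeasure g = ∫ ω, g ω ∂μ := by
  have h : μ.toSignedMeasure.toJordanDecomposition =
      JordanDecomposition.mk μ 0 Measure.MutuallySingular.zero_right := by
    apply SignedMeasure.toJordanDecomposition_eq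
    simp [JordanDecomposition.toSignedMeasure]
  simp [smIntegral, h]

lemma cmIntegral_self (E : POVM Ω H) (hf : Measurable f) (hpos : ∀ ω, 0 ≤ f ω) (φ : H) :
    cmIntegral (E.cm φ φ) (fun ω => (f ω : ℂ)) = ((E.energy f φ).toReal : ℂ) := by
  obtain ⟨_, h⟩ := E.exists_diag φ
  have h0 : smIntegral (0 : SignedMeasure Ω) (fun ω => (f ω : ℂ)) = 0 := by
    simp [smIntegral, SignedMeasure.toJordanDecomposition_zero]
  rw [cmIntegral, E.im_cm_self φ, h, smIntegral_toSignedMeasure, h0, integral_complex_ofReal,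
    integral_eq_lintegral_of_nonneg_ae (Eventually.of_forall hpos) hf.aestronglyMeasurable]
  simp [energy]

lemma energy_sub_lt_top (E : POVM Ω H) {ψ φ : H} (hψ : E.energy f ψ < ∞)
    (hφ : E.energy f φ < ∞) : E.energy f (ψ - φ) < ∞ := by
  refine (lintegral_mono' (E.diag_sub_le ψ φ) le_rfl).trans_lt ?_
  simp only [lintegral_add_measure]
  exact ENNReal.add_lt_top.2 ⟨ENNReal.add_lt_top.2 ⟨hψ, hφ⟩, ENNReal.add_lt_top.2 ⟨hψ, hφ⟩⟩

lemma cmIntegral_symm (E : POVM Ω H) (f : Ω → ℝ) (ψ φ : H) :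
    cmIntegral (E.cm ψ φ) (fun ω => (f ω : ℂ)) =
      conj (cmIntegral (E.cm φ ψ) (fun ω => (f ω : ℂ))) := by
  have hre : ComplexMeasure.re (E.cm ψ φ) = ComplexMeasure.re (E.cm φ ψ) := by
    ext X hX
    rw [E.re_cm_apply ψ φ hX, E.re_cm_apply φ ψ hX, E.op_symm ψ φ hX, Complex.conj_re]
  have him : ComplexMeasure.im (E.cm ψ φ) = -ComplexMeasure.im (E.cm φ ψ) := by
    ext X hX
    rw [neg_apply, E.im_cm_apply ψ φ hX, E.im_cm_apply φ ψ hX, E.op_symm ψ φ hX,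
      Complex.conj_im]
  simp only [cmIntegral, hre, him, smIntegral_neg, map_add, map_mul, smIntegral_ofReal,
    Complex.conj_I]
  ring

/-- Lower semicontinuity turns a bound on `E.energy f (φs n - φs m)` for large `m` into the same
bound on `E.energy f (φs n - φ)`. -/
lemma tendsto_energy_sub (E : POVM Ω H) {φs : ℕ → H} {φ : H}
    (hφ : Tendsto φs atTop (nhds φ))
    (hc : Tendsto (fun p : ℕ × ℕ => E.energy f (φs p.1 - φs p.2)) (atTop ×ˢ atTop) (nhds 0)) :
    Tendsto (fun n => E.energy f (φs n - φ)) atTop (nhds 0) := by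
  rw [ENNReal.tendsto_nhds_zero] at hc ⊢
  intro ε hε
  filter_upwards [(hc ε hε).curry] with n hn
  by_contra! hlt
  have h1 : Tendsto (fun m => φs n - φs m) atTop (nhds (φs n - φ)) := hφ.const_sub _
  obtain ⟨m, hm, hm'⟩ :=
    (hn.and (h1.eventually (E.lowerSemicontinuous_energy f _ ε hlt))).exists
  exact absurd hm (not_le.2 hm')

end POVM

theorem stmt_12 {Ω : Type*} [MeasurableSpace Ω] {H : Type*}
    [NormedAddCommGroup H] [InnerProductSpace ℂ H] [CompleteSpace H]
    (E : POVM Ω H) (f : Ω → ℝ) (hf : Measurable f) (hpos : ∀ ω, 0 ≤ f ω)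
    (hdense : Dense {φ : H | CMIntegrable (E.cm φ φ) (fun ω => (f ω : ℂ))}) :
    let Ft : Set H := {φ : H | CMIntegrable (E.cm φ φ) (fun ω => (f ω : ℂ))}
    let q : H → H → ℂ := fun ψ φ => cmIntegral (E.cm ψ φ) (fun ω => (f ω : ℂ))
    (∀ φ ∈ Ft, ∀ ψ ∈ Ft, CMIntegrable (E.cm ψ φ) (fun ω => (f ω : ℂ))) ∧
    (∀ φ ∈ Ft, 0 ≤ (q φ φ).re ∧ (q φ φ).im = 0) ∧
    (∀ φ ∈ Ft, ∀ ψ ∈ Ft, q ψ φ = conj (q φ ψ)) ∧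
    (∀ φs : ℕ → H, (∀ n, φs n ∈ Ft) → ∀ φ : H,
      Filter.Tendsto φs Filter.atTop (nhds φ) →
      Filter.Tendsto (fun p : ℕ × ℕ => q (φs p.1 - φs p.2) (φs p.1 - φs p.2))
        (Filter.atTop ×ˢ Filter.atTop) (nhds 0) →
      φ ∈ Ft ∧
        Filter.Tendsto (fun n => q (φs n - φ) (φs n - φ)) Filter.atTop (nhds 0)) := by
  intro Ft q
  have mem : ∀ φ, φ ∈ Ft ↔ E.energy f φ < ∞ := E.integrable_iff_energy hf hpos
  have hq : ∀ φ, q φ φ = ((E.energy f φ).toReal : ℂ) := E.cmIntegral_self hf hpos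
  refine ⟨fun φ hφ ψ hψ => ?_, fun φ _ => ?_, fun φ _ ψ _ => E.cmIntegral_symm f ψ φ, ?_⟩
  · exact ((Integrable.add_measure hψ hφ).add_measure
      (Integrable.add_measure hψ hφ)).mono_measure (E.cmVariation_le ψ φ)
  · rw [hq]
    simp
  · clear_value Ft q
    intro φs hmem φ hφ hc
    have hfin : ∀ n m, E.energy f (φs n - φs m) < ∞ := fun n m =>
      E.energy_sub_lt_top ((mem _).1 (hmem n)) ((mem _).1 (hmem m))
    have hc' : Tendsto (fun p : ℕ × ℕ => E.energy f (φs p.1 - φs p.2))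
        (atTop ×ˢ atTop) (nhds 0) := by
      have h : Tendsto (fun p : ℕ × ℕ => (E.energy f (φs p.1 - φs p.2)).toReal)
          (atTop ×ˢ atTop) (nhds (0 : ℝ≥0∞).toReal) := by
        simp only [hq] at hc
        exact (Complex.continuous_re.tendsto 0).comp hc
      exact (ENNReal.tendsto_toReal_iff (fun p : ℕ × ℕ => (hfin p.1 p.2).ne)
        ENNReal.zero_ne_top).1 h
    have ht := E.tendsto_energy_sub hφ hc'
    refine ⟨?_, ?_⟩
    · obtain ⟨n, hn⟩ := (ht.eventually (gt_mem_nhds ENNReal.zero_lt_top)).exists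
      rw [mem, ← sub_sub_cancel (φs n) φ]
      exact E.energy_sub_lt_top ((mem _).1 (hmem n)) hn
    · simp only [hq]
      have h := (ENNReal.tendsto_toReal ENNReal.zero_ne_top).comp ht
      simpa [Function.comp_def] using (Complex.continuous_ofReal.tendsto _).comp h
end

section
/- Let E : 𝒜 → L(H) be a POVM and f : Ω → [0,∞) a measurable function such that F̃ := {φ ∈ H : ∫ f dE_{φ,φ} < ∞} is dense in H. Let (K, F, V) be a Naimark dilation of E: K a complex Hilbert space, F : 𝒜 → L(K) a spectral measure, V : H → K a bounded linear map, with E(X) = V*F(X)V for all X ∈ 𝒜. Define A : F̃ → K by letting Aφ be the unique vector of K satisfying ⟨ξ, Aφ⟩ = ∫ √f dF_{ξ,Vφ} for all ξ ∈ K (this vector exists since ∫ f dF_{Vφ,Vφ} = ∫ f dE_{φ,φ} < ∞; A is the spectral integral of √f with respect to F composed with V). Then T := A*A is a positive selfadjoint operator in H, with dom(T) = {φ ∈ F̃ : the functional F̃ ∋ ψ ↦ ∫ f dE_{ψ,φ} is bounded} and ⟨ψ, Tφ⟩ = ∫ f dE_{ψ,φ} for all ψ ∈ F̃ and φ ∈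 dom(T); that is, T is the largest symmetric weak operator integral of f with respect to E. -/
/-!
Write `μ_φ` for the finite positive measure `E_{φ,φ}`. By polarization, `4 E_{ψ,φ}` is a
combination of four measures `μ_{φ + iᵏψ}`, so integrals against the complex measure reduce to
integrals against positive measures (`POVM.cmIntegral_eq_polar`), and the set `F̃` is a subspace
by the parallelogram law (`POVM.formDomain`).

The operator `A` is understood through simple functions. For a spectral measure `F` and a simple
function `s`, the vector `(∫ s dF)η` is linear in `η` and has squared norm `∫ s² dF_{η,η}`. If
simple functions `s n` with `|s n| ≤ 2√f` converge to `√f`, then `(∫ s n dF)Vφ → Aφ` for `φ ∈ F̃`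
(`POVM.spectral_limit`); the limit is identified by testing against the dense set of `ξ` with
`∫ f dF_{ξ,ξ} < ∞`. Hence `A` is linear on `F̃` and `‖Aφ‖² = ∫ f dμ_φ`, and by polarization
`⟨Aψ, Aφ⟩ = ∫ f dE_{ψ,φ}`.

The form `φ ↦ ∫ f dμ_φ` is a supremum of continuous functions, hence lower semicontinuous, which
makes `A` closed (`closed_of_norm_sq`). Von Neumann's theorem for closed densely defined operators
(`adjoint_mul_self_selfAdjoint`) then gives the result. It rests on the solvability of
`φ + A*Aφ = w` for every `w`, obtained by projecting `(w, 0)` orthogonally onto the graph of `A`.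
-/

open MeasureTheory ComplexConjugate Filter
open scoped ComplexInnerProductSpace ENNReal NNReal

/-! ### Integrals against signed and complex measures -/

lemma jordan_apply {Ω : Type*} [MeasurableSpace Ω] (s : SignedMeasure Ω) {X : Set Ω}
    (hX : MeasurableSet X) :
    s X = s.toJordanDecomposition.posPart.real X - s.toJordanDecomposition.negPart.real X := by
  conv_lhs => rw [← s.toSignedMeasure_toJordanDecomposition]
  rw [JordanDecomposition.toSignedMeasure, Measure.toSignedMeasure_sub_apply hX]

/-- Minimality of the Jordan decomposition, up to the factor `4` of the polarization identity. -/
lemma posPart_le_of_diff {Ω : Type*} [MeasurableSpace Ω] (s : SignedMeasure Ω)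
    (μ₁ μ₂ : Measure Ω) [IsFiniteMeasure μ₁] [IsFiniteMeasure μ₂]
    (hs : ∀ X, MeasurableSet X → 4 * s X = μ₁.real X - μ₂.real X) :
    s.toJordanDecomposition.posPart ≤ μ₁ ∧ s.toJordanDecomposition.negPart ≤ μ₂ := by
  obtain ⟨S, hS, hp, hn⟩ := s.toJordanDecomposition.mutuallySingular
  have key : ∀ (μ ν : Measure Ω) [IsFiniteMeasure μ] [IsFiniteMeasure ν],
      (∀ X, MeasurableSet X → μ.real X ≤ ν.real X) → μ ≤ ν := by
    intro μ ν _ _ h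
    refine Measure.le_iff.2 fun X hX => ?_
    exact (ENNReal.toReal_le_toReal (measure_ne_top _ _) (measure_ne_top _ _)).1 (h X hX)
  constructor
  · refine key _ _ fun X hX => ?_
    have h1 := measureReal_inter_add_sdiff (μ := s.toJordanDecomposition.posPart) (s := X) hS
    have h2 : s.toJordanDecomposition.posPart.real (X ∩ S) = 0 := by
      rw [measureReal_def, measure_mono_null Set.inter_subset_right hp, ENNReal.toReal_zero]
    have h3 : s.toJordanDecomposition.negPart.real (X \ S) = 0 := by
      rw [measureReal_def, measure_mono_null (fun x hx => hx.2) hn, ENNReal.toReal_zero]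
    have h4 := jordan_apply s (hX.diff hS)
    have h5 := hs _ (hX.diff hS)
    have h6 : μ₁.real (X \ S) ≤ μ₁.real X := measureReal_mono Set.sdiff_subset
    have h7 : 0 ≤ μ₂.real (X \ S) := measureReal_nonneg
    have h8 : 0 ≤ s.toJordanDecomposition.posPart.real (X \ S) := measureReal_nonneg
    linarith
  · refine key _ _ fun X hX => ?_
    have h1 := measureReal_inter_add_sdiff (μ := s.toJordanDecomposition.negPart) (s := X) hS
    have h2 : s.toJordanDecomposition.posPart.real (X ∩ S) = 0 := by
      rw [measureReal_def, measure_mono_null Set.inter_subset_right hp, ENNReal.toReal_zero]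
    have h3 : s.toJordanDecomposition.negPart.real (X \ S) = 0 := by
      rw [measureReal_def, measure_mono_null (fun x hx => hx.2) hn, ENNReal.toReal_zero]
    have h4 := jordan_apply s (hX.inter hS)
    have h5 := hs _ (hX.inter hS)
    have h6 : μ₂.real (X ∩ S) ≤ μ₂.real X := measureReal_mono Set.inter_subset_left
    have h7 : 0 ≤ μ₁.real (X ∩ S) := measureReal_nonneg
    have h8 : 0 ≤ s.toJordanDecomposition.negPart.real (X ∩ S) := measureReal_nonneg
    linarith

/-- If `4 s = μ₁ - μ₂` with finite positive measures, the integral against `s` can be computed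
from `μ₁` and `μ₂` for functions integrable for both. -/
lemma smIntegral_of_diff {Ω : Type*} [MeasurableSpace Ω] (s : SignedMeasure Ω)
    (μ₁ μ₂ : Measure Ω) [IsFiniteMeasure μ₁] [IsFiniteMeasure μ₂]
    (hs : ∀ X, MeasurableSet X → 4 * s X = μ₁.real X - μ₂.real X)
    (h : Ω → ℂ) (h1 : Integrable h μ₁) (h2 : Integrable h μ₂) :
    4 * smIntegral s h = (∫ ω, h ω ∂μ₁) - ∫ ω, h ω ∂μ₂ := by
  obtain ⟨hp, hn⟩ := posPart_le_of_diff s μ₁ μ₂ hs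
  have ip := h1.mono_measure hp
  have iN := h2.mono_measure hn
  have hm : (4 : ℝ≥0) • s.toJordanDecomposition.posPart + μ₂
      = (4 : ℝ≥0) • s.toJordanDecomposition.negPart + μ₁ := by
    ext X hX
    rw [← ENNReal.toReal_eq_toReal_iff' (measure_ne_top _ _) (measure_ne_top _ _)]
    have e1 := hs X hX
    rw [jordan_apply s hX] at e1
    simp only [← measureReal_def]
    rw [measureReal_add_apply, measureReal_add_apply, measureReal_nnreal_smul_apply,
      measureReal_nnreal_smul_apply]
    push_cast
    linarith
  have e := congrArg (fun μ => ∫ ω, h ω ∂μ) hm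
  rw [integral_add_measure (ip.smul_measure_nnreal) h2,
    integral_add_measure (iN.smul_measure_nnreal) h1, integral_smul_nnreal_measure,
    integral_smul_nnreal_measure] at e
  simp only [NNReal.smul_def, Complex.real_smul] at e
  push_cast at e
  rw [smIntegral]
  linear_combination e

/-! ### The diagonal measures of a positive operator measure -/

section Diag

variable {Ω : Type*} [MeasurableSpace Ω] {H : Type*} [NormedAddCommGroup H]
  [InnerProductSpace ℂ H]

/-- The finite positive measure `E_{φ,φ}`, encoded as the positive part of the real part of the
complex measure `E.cm φ φ`. -/
noncomputable def POVM.diag_s13 (E : POVM Ω H) (φ : H) : Measure Ω :=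
  (ComplexMeasure.re (E.cm φ φ)).toJordanDecomposition.posPart

instance (E : POVM Ω H) (φ : H) : IsFiniteMeasure (E.diag_s13 φ) := by
  unfold POVM.diag_s13; infer_instance

lemma POVM.re_cm (E : POVM Ω H) (ψ φ : H) {X : Set Ω} (hX : MeasurableSet X) :
    ComplexMeasure.re (E.cm ψ φ) X = (⟪ψ, E.op X φ⟫).re := by
  rw [← E.cm_apply ψ φ X hX]; rfl

lemma POVM.im_cm (E : POVM Ω H) (ψ φ : H) {X : Set Ω} (hX : MeasurableSet X) :
    ComplexMeasure.im (E.cm ψ φ) X = (⟪ψ, E.op X φ⟫).im := by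
  rw [← E.cm_apply ψ φ X hX]; rfl

lemma POVM.negPart_diag (E : POVM Ω H) (φ : H) :
    (ComplexMeasure.re (E.cm φ φ)).toJordanDecomposition.negPart = 0 := by
  set s := ComplexMeasure.re (E.cm φ φ) with hs
  obtain ⟨S, hS, hp, hn⟩ := s.toJordanDecomposition.mutuallySingular
  have h1 := jordan_apply s hS
  have h2 : 0 ≤ s S := by rw [hs, E.re_cm φ φ hS]; exact (E.pos φ S hS).1
  have h3 : s.toJordanDecomposition.posPart.real S = 0 := by
    rw [measureReal_def, hp, ENNReal.toReal_zero]
  have h4 : 0 ≤ s.toJordanDecomposition.negPart.real S := measureReal_nonneg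
  have h5 : s.toJordanDecomposition.negPart.real S = 0 := by linarith
  have h6 : s.toJordanDecomposition.negPart S = 0 := (measureReal_eq_zero_iff).1 h5
  rw [← Measure.measure_univ_eq_zero, ← Set.union_compl_self S]
  exact measure_union_null h6 hn

lemma POVM.diag_real (E : POVM Ω H) (φ : H) {X : Set Ω} (hX : MeasurableSet X) :
    (E.diag_s13 φ).real X = (⟪φ, E.op X φ⟫).re := by
  have := jordan_apply (ComplexMeasure.re (E.cm φ φ)) hX
  rw [E.negPart_diag, E.re_cm φ φ hX] at this
  simp at this
  exact this.symm

lemma POVM.inner_diag (E : POVM Ω H) (φ : H) {X : Set Ω} (hX : MeasurableSet X) :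
    ⟪φ, E.op X φ⟫ = (((E.diag_s13 φ).real X : ℝ) : ℂ) := by
  apply Complex.ext
  · simp [E.diag_real φ hX]
  · simpa using (E.pos φ X hX).2

lemma POVM.diag_apply_s13 (E : POVM Ω H) (φ : H) {X : Set Ω} (hX : MeasurableSet X) :
    E.diag_s13 φ X = ENNReal.ofReal (⟪φ, E.op X φ⟫).re := by
  rw [← E.diag_real φ hX, ofReal_measureReal]

lemma POVM.cmVariation_diag (E : POVM Ω H) (φ : H) : cmVariation (E.cm φ φ) = E.diag_s13 φ := by
  have him : ComplexMeasure.im (E.cm φ φ) = 0 := by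
    ext X hX
    rw [E.im_cm φ φ hX, (E.pos φ X hX).2]; rfl
  rw [cmVariation, SignedMeasure.totalVariation, E.negPart_diag, him,
    SignedMeasure.totalVariation_zero, add_zero, add_zero]
  rfl

lemma POVM.cmIntegrable_iff (E : POVM Ω H) (φ : H) (f : Ω → ℝ) :
    CMIntegrable (E.cm φ φ) (fun ω => (f ω : ℂ)) ↔ Integrable f (E.diag_s13 φ) := by
  rw [CMIntegrable, E.cmVariation_diag]
  exact ⟨fun h => by simpa using h.re, fun h => h.ofReal⟩

/-- The right-hand side of the polarization identity for the diagonal integrals of `h`; it equals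
`4 ∫ h dE_{ψ,φ}` when these integrals converge. -/
noncomputable def POVM.polar (E : POVM Ω H) (ψ φ : H) (h : Ω → ℝ) : ℂ :=
  ((∫ ω, h ω ∂E.diag_s13 (φ + ψ) : ℝ) : ℂ) - ((∫ ω, h ω ∂E.diag_s13 (φ - ψ) : ℝ) : ℂ) +
    Complex.I * (((∫ ω, h ω ∂E.diag_s13 (φ + Complex.I • ψ) : ℝ) : ℂ) -
      ((∫ ω, h ω ∂E.diag_s13 (φ - Complex.I • ψ) : ℝ) : ℂ))

lemma POVM.polarization (E : POVM Ω H) (ψ φ : H) {X : Set Ω} (hX : MeasurableSet X) :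
    4 * ⟪ψ, E.op X φ⟫ = (((E.diag_s13 (φ + ψ)).real X : ℝ) : ℂ) - (((E.diag_s13 (φ - ψ)).real X : ℝ) : ℂ)
      + Complex.I * ((((E.diag_s13 (φ + Complex.I • ψ)).real X : ℝ) : ℂ) -
        (((E.diag_s13 (φ - Complex.I • ψ)).real X : ℝ) : ℂ)) := by
  simp only [← E.inner_diag _ hX, map_add, map_sub, map_smul, inner_add_left, inner_add_right,
    inner_sub_left, inner_sub_right, inner_smul_left, inner_smul_right, Complex.conj_I]
  linear_combination (2 * ⟪φ, E.op X ψ⟫ - 2 * ⟪ψ, E.op X φ⟫) * (-Complex.I_sq)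

lemma POVM.cmIntegral_eq_polar (E : POVM Ω H) (ψ φ : H) (h : Ω → ℝ)
    (h1 : Integrable h (E.diag_s13 (φ + ψ))) (h2 : Integrable h (E.diag_s13 (φ - ψ)))
    (h3 : Integrable h (E.diag_s13 (φ + Complex.I • ψ)))
    (h4 : Integrable h (E.diag_s13 (φ - Complex.I • ψ))) :
    4 * cmIntegral (E.cm ψ φ) (fun ω => (h ω : ℂ)) = E.polar ψ φ h := by
  have e1 := smIntegral_of_diff (ComplexMeasure.re (E.cm ψ φ)) (E.diag_s13 (φ + ψ)) (E.diag_s13 (φ - ψ))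
    (fun X hX => by
      have := congrArg Complex.re (E.polarization ψ φ hX)
      rw [E.re_cm ψ φ hX]
      simpa using this) (fun ω => (h ω : ℂ)) h1.ofReal h2.ofReal
  have e2 := smIntegral_of_diff (ComplexMeasure.im (E.cm ψ φ)) (E.diag_s13 (φ + Complex.I • ψ))
    (E.diag_s13 (φ - Complex.I • ψ))
    (fun X hX => by
      have := congrArg Complex.im (E.polarization ψ φ hX)
      rw [E.im_cm ψ φ hX]
      simpa using this) (fun ω => (h ω : ℂ)) h3.ofReal h4.ofReal
  rw [integral_complex_ofReal, integral_complex_ofReal] at e1 e2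
  rw [cmIntegral, POVM.polar]
  linear_combination e1 + Complex.I * e2

lemma POVM.diag_smul (E : POVM Ω H) (c : ℂ) (φ : H) :
    E.diag_s13 (c • φ) = (‖c‖₊ ^ 2) • E.diag_s13 φ := by
  ext X hX
  rw [← ENNReal.toReal_eq_toReal_iff' (measure_ne_top _ _) (measure_ne_top _ _)]
  simp only [← measureReal_def]
  rw [measureReal_nnreal_smul_apply]
  have : (((E.diag_s13 (c • φ)).real X : ℝ) : ℂ) = (((‖c‖ ^ 2 * (E.diag_s13 φ).real X) : ℝ) : ℂ) := by
    push_cast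
    rw [← E.inner_diag _ hX, ← E.inner_diag _ hX, map_smul, inner_smul_left, inner_smul_right,
      ← mul_assoc, mul_comm ((starRingEnd ℂ) c), Complex.mul_conj']
  simpa using Complex.ofReal_injective this

lemma POVM.diag_parallelogram (E : POVM Ω H) (φ ψ : H) :
    E.diag_s13 (φ + ψ) + E.diag_s13 (φ - ψ) = (2 : ℝ≥0) • (E.diag_s13 φ + E.diag_s13 ψ) := by
  ext X hX
  rw [← ENNReal.toReal_eq_toReal_iff' (measure_ne_top _ _) (measure_ne_top _ _)]
  simp only [← measureReal_def]
  rw [measureReal_nnreal_smul_apply, measureReal_add_apply, measureReal_add_apply]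
  simp only [E.diag_real _ hX, map_add, map_sub, inner_add_left, inner_add_right, inner_sub_left,
    inner_sub_right, Complex.add_re, Complex.sub_re]
  push_cast
  ring

/-- For a fixed real function `f`, the vectors `φ` with `∫ |f| dE_{φ,φ} < ∞` form a subspace. -/
noncomputable def POVM.formDomain (E : POVM Ω H) (f : Ω → ℝ) : Submodule ℂ H where
  carrier := {φ | Integrable f (E.diag_s13 φ)}
  zero_mem' := by
    have : E.diag_s13 (0 : H) = 0 := by simpa using E.diag_smul 0 (0 : H)
    simp [this]
  add_mem' := by
    intro φ ψ h1 h2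
    have h := (h1.add_measure h2).smul_measure_nnreal (c := 2)
    rw [← E.diag_parallelogram] at h
    exact h.left_of_add_measure
  smul_mem' := by
    intro c φ h
    simp only [Set.mem_ofPred_eq] at h ⊢
    rw [E.diag_smul]
    exact h.smul_measure_nnreal

lemma POVM.mem_formDomain {E : POVM Ω H} {f : Ω → ℝ} {φ : H} :
    φ ∈ E.formDomain f ↔ Integrable f (E.diag_s13 φ) := Iff.rfl

lemma POVM.cmIntegral_eq_polar_of_mem (E : POVM Ω H) {ψ φ : H} {h : Ω → ℝ}
    (hψ : ψ ∈ E.formDomain h) (hφ : φ ∈ E.formDomain h) :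
    4 * cmIntegral (E.cm ψ φ) (fun ω => (h ω : ℂ)) = E.polar ψ φ h :=
  E.cmIntegral_eq_polar ψ φ h ((E.formDomain h).add_mem hφ hψ) ((E.formDomain h).sub_mem hφ hψ)
    ((E.formDomain h).add_mem hφ ((E.formDomain h).smul_mem _ hψ))
    ((E.formDomain h).sub_mem hφ ((E.formDomain h).smul_mem _ hψ))

/-- Lower semicontinuity of the quadratic form `φ ↦ ∫ f dE_{φ,φ}`: it is a supremum of integrals of
simple functions, which are continuous in `φ`. -/
lemma POVM.lintegral_diag_le (E : POVM Ω H) {f : Ω → ℝ≥0∞} (hf : Measurable f)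
    {u : ℕ → H} {φ : H} (hu : Tendsto u atTop (nhds φ)) {c : ℕ → ℝ≥0∞} {d : ℝ≥0∞}
    (hc : Tendsto c atTop (nhds d)) (h : ∀ k, ∫⁻ ω, f ω ∂E.diag_s13 (u k) ≤ c k) :
    ∫⁻ ω, f ω ∂E.diag_s13 φ ≤ d := by
  rw [lintegral_eq_iSup_eapprox_lintegral hf]
  refine iSup_le fun n => ?_
  have hcont : Continuous fun x : H => (SimpleFunc.eapprox f n).lintegral (E.diag_s13 x) := by
    simp only [SimpleFunc.lintegral]
    refine continuous_finsetSum _ fun y hy => ?_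
    have hy' : y ≠ ∞ := by
      obtain ⟨ω, rfl⟩ := SimpleFunc.mem_range.1 hy
      exact (SimpleFunc.eapprox_lt_top f n ω).ne
    simp only [E.diag_apply_s13 _ (SimpleFunc.measurableSet_fiber _ y)]
    refine (ENNReal.continuous_const_mul hy').comp (ENNReal.continuous_ofReal.comp ?_)
    exact Complex.continuous_re.comp (continuous_id.inner (E.op _).continuous)
  refine le_of_tendsto_of_tendsto' ((hcont.tendsto φ).comp hu) hc fun k => ?_
  exact (lintegral_eapprox_le_lintegral hf n).trans (h k)

end Diag

/-! ### The spectral integral of simple functions -/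

section Spectral

variable {Ω : Type*} [MeasurableSpace Ω] {K : Type*} [NormedAddCommGroup K]
  [InnerProductSpace ℂ K]

lemma POVM.op_union (F : POVM Ω K) {X Y : Set Ω} (hX : MeasurableSet X) (hY : MeasurableSet Y)
    (hXY : Disjoint X Y) : F.op (X ∪ Y) = F.op X + F.op Y := by
  ext η
  refine ext_inner_left ℂ fun ξ => ?_
  have := VectorMeasure.of_union (v := F.cm ξ η) hXY hX hY
  rw [F.cm_apply _ _ _ (hX.union hY), F.cm_apply _ _ _ hX, F.cm_apply _ _ _ hY] at this
  simpa [inner_add_right] using this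

/-- The set function `X ↦ (c ↦ c F(X)η)` whose associated integral of simple functions is the
spectral integral applied to `η`. -/
noncomputable def POVM.opMap (F : POVM Ω K) (η : K) (X : Set Ω) : ℝ →L[ℝ] K :=
  (ContinuousLinearMap.id ℝ ℝ).smulRight (F.op X η)

/-- The vector `(∫ s dF) η` for a real simple function `s`. -/
noncomputable def POVM.simpleInt (F : POVM Ω K) (s : SimpleFunc Ω ℝ) (η : K) : K :=
  s.setToSimpleFunc (F.opMap η)

lemma POVM.simpleInt_eq (F : POVM Ω K) (s : SimpleFunc Ω ℝ) (η : K) :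
    F.simpleInt s η = ∑ x ∈ s.range, (x : ℂ) • F.op (s ⁻¹' {x}) η := by
  simp [POVM.simpleInt, SimpleFunc.setToSimpleFunc, POVM.opMap]

lemma POVM.simpleInt_add (F : POVM Ω K) (s : SimpleFunc Ω ℝ) (η ζ : K) :
    F.simpleInt s (η + ζ) = F.simpleInt s η + F.simpleInt s ζ := by
  simp [POVM.simpleInt_eq, Finset.sum_add_distrib]

lemma POVM.simpleInt_smul (F : POVM Ω K) (s : SimpleFunc Ω ℝ) (c : ℂ) (η : K) :
    F.simpleInt s (c • η) = c • F.simpleInt s η := by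
  simp only [POVM.simpleInt_eq, map_smul, Finset.smul_sum]
  exact Finset.sum_congr rfl fun x _ => smul_comm _ _ _

lemma POVM.simpleInt_sub_left (F : POVM Ω K) (s t : SimpleFunc Ω ℝ) (η : K) :
    F.simpleInt (s - t) η = F.simpleInt s η - F.simpleInt t η := by
  refine SimpleFunc.setToSimpleFunc_sub (μ := F.diag_s13 η) _ ?_ ?_ ?_
  · intro X Y hX hY _ _ hXY
    ext
    simp [POVM.opMap, F.op_union hX hY hXY]
  · exact s.integrable_of_isFiniteMeasure
  · exact t.integrable_of_isFiniteMeasure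

lemma simple_integral_eq {μ : Measure Ω} [IsFiniteMeasure μ] (s : SimpleFunc Ω ℝ) :
    ∫ ω, s ω ∂μ = ∑ x ∈ s.range, x * μ.real (s ⁻¹' {x}) := by
  rw [← SimpleFunc.integral_eq_integral s s.integrable_of_isFiniteMeasure,
    SimpleFunc.integral_eq]
  simp [mul_comm]

lemma simple_integral_sq {μ : Measure Ω} [IsFiniteMeasure μ] (s : SimpleFunc Ω ℝ) :
    ∫ ω, s ω ^ 2 ∂μ = ∑ x ∈ s.range, x ^ 2 * μ.real (s ⁻¹' {x}) := by
  have h := SimpleFunc.map_integral (μ := μ) s (fun x : ℝ => x ^ 2)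
    s.integrable_of_isFiniteMeasure (by simp)
  rw [SimpleFunc.integral_eq_integral _ (SimpleFunc.integrable_of_isFiniteMeasure _)] at h
  simpa [mul_comm] using h

/-- The weak form of the spectral integral of a simple function, polarized. -/
lemma POVM.inner_simpleInt (F : POVM Ω K) (s : SimpleFunc Ω ℝ) (ξ η : K) :
    4 * ⟪ξ, F.simpleInt s η⟫ = F.polar ξ η s := by
  rw [POVM.simpleInt_eq, inner_sum, Finset.mul_sum, POVM.polar]
  simp only [simple_integral_eq]
  push_cast
  rw [← Finset.sum_sub_distrib, ← Finset.sum_sub_distrib, Finset.mul_sum, ← Finset.sum_add_distrib]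
  refine Finset.sum_congr rfl fun x _ => ?_
  rw [inner_smul_right]
  linear_combination (x : ℂ) * F.polarization ξ η (s.measurableSet_fiber x)

variable [CompleteSpace K]

/-- The projections `F(X)`, `F(Y)` of disjoint sets have orthogonal ranges: `F(Y) ≤ 1 - F(X)`. -/
lemma POVM.op_op_of_disjoint (F : POVM Ω K)
    (hFproj : ∀ X : Set Ω, MeasurableSet X →
      ContinuousLinearMap.adjoint (F.op X) = F.op X ∧ (F.op X).comp (F.op X) = F.op X)
    (hFnorm : F.op Set.univ = 1) {X Y : Set Ω} (hX : MeasurableSet X) (hY : MeasurableSet Y)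
    (hXY : Disjoint X Y) (η : K) :
    F.diag_s13 (F.op X η) Xᶜ = 0 ∧ F.op Y (F.op X η) = 0 := by
  have hidem : ∀ Z, MeasurableSet Z → ∀ ζ, F.op Z (F.op Z ζ) = F.op Z ζ := fun Z hZ ζ =>
    congrArg (fun T : K →L[ℂ] K => T ζ) (hFproj Z hZ).2
  have hc : F.op Xᶜ (F.op X η) = 0 := by
    have h := F.op_union hX hX.compl disjoint_compl_right
    rw [Set.union_compl_self, hFnorm] at h
    have h' := congrArg (fun T : K →L[ℂ] K => T (F.op X η)) h
    simpa [hidem X hX η] using h'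
  have h0 : F.diag_s13 (F.op X η) Xᶜ = 0 := by
    rw [F.diag_apply_s13 _ hX.compl, hc]; simp
  refine ⟨h0, ?_⟩
  have h1 : F.diag_s13 (F.op X η) Y = 0 :=
    measure_mono_null (fun y hy hx => Set.disjoint_left.1 hXY hx hy) h0
  have h2 := F.inner_diag (F.op X η) hY
  rw [measureReal_def, h1] at h2
  rw [← hidem Y hY, ← ContinuousLinearMap.adjoint_inner_left, (hFproj Y hY).1] at h2
  simpa using h2

lemma POVM.norm_op_sq (F : POVM Ω K)
    (hFproj : ∀ X : Set Ω, MeasurableSet X →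
      ContinuousLinearMap.adjoint (F.op X) = F.op X ∧ (F.op X).comp (F.op X) = F.op X)
    {X : Set Ω} (hX : MeasurableSet X) (η : K) :
    ⟪F.op X η, F.op X η⟫ = (((F.diag_s13 η).real X : ℝ) : ℂ) := by
  rw [← F.inner_diag η hX]
  nth_rewrite 1 [← (hFproj X hX).1]
  rw [ContinuousLinearMap.adjoint_inner_left]
  exact congrArg (fun T : K →L[ℂ] K => ⟪η, T η⟫) (hFproj X hX).2

/-- The spectral integral is isometric for the `L²(F_{η,η})` norm. -/
lemma POVM.norm_simpleInt_sq (F : POVM Ω K)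
    (hFproj : ∀ X : Set Ω, MeasurableSet X →
      ContinuousLinearMap.adjoint (F.op X) = F.op X ∧ (F.op X).comp (F.op X) = F.op X)
    (hFnorm : F.op Set.univ = 1) (s : SimpleFunc Ω ℝ) (η : K) :
    ‖F.simpleInt s η‖ ^ 2 = ∫ ω, s ω ^ 2 ∂F.diag_s13 η := by
  have h : ⟪F.simpleInt s η, F.simpleInt s η⟫ = ((∫ ω, s ω ^ 2 ∂F.diag_s13 η : ℝ) : ℂ) := by
    rw [simple_integral_sq, POVM.simpleInt_eq, sum_inner]
    push_cast
    refine Finset.sum_congr rfl fun x hx => ?_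
    rw [inner_sum, Finset.sum_eq_single_of_mem x hx]
    · rw [inner_smul_left, inner_smul_right, F.norm_op_sq hFproj (s.measurableSet_fiber x),
        Complex.conj_ofReal]
      ring
    · intro y _ hyx
      have hd : Disjoint (s ⁻¹' {y}) (s ⁻¹' {x}) := by
        refine Disjoint.preimage _ ?_
        simpa using hyx
      rw [inner_smul_left, inner_smul_right]
      nth_rewrite 1 [← (hFproj _ (s.measurableSet_fiber x)).1]
      rw [ContinuousLinearMap.adjoint_inner_left,
        (F.op_op_of_disjoint hFproj hFnorm (s.measurableSet_fiber y) (s.measurableSet_fiber x)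
          hd η).2]
      simp
  rw [inner_self_eq_norm_sq_to_K] at h
  exact Complex.ofReal_injective (by simpa using h)

/-! ### The spectral integral of a square-integrable function -/

/-- Vectors on which the quadratic form of `f` is finite are dense: `F({f ≤ n})ξ → ξ`. -/
lemma POVM.dense_formDomain (F : POVM Ω K)
    (hFproj : ∀ X : Set Ω, MeasurableSet X →
      ContinuousLinearMap.adjoint (F.op X) = F.op X ∧ (F.op X).comp (F.op X) = F.op X)
    (hFnorm : F.op Set.univ = 1) {f : Ω → ℝ} (hf : Measurable f) (hpos : ∀ ω, 0 ≤ f ω) :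
    Dense (F.formDomain f : Set K) := by
  intro ξ
  have hXm : ∀ n : ℕ, MeasurableSet {ω | f ω ≤ n} := fun n => measurableSet_le hf measurable_const
  refine mem_closure_of_tendsto (f := fun n : ℕ => F.op {ω | f ω ≤ n} ξ) (b := atTop) ?_
    (Eventually.of_forall fun n => ?_)
  · rw [tendsto_iff_norm_sub_tendsto_zero]
    have hsq : Tendsto (fun n : ℕ => ‖F.op {ω | f ω ≤ n} ξ - ξ‖ ^ 2) atTop (nhds 0) := by
      have e : ∀ n : ℕ, ‖F.op {ω | f ω ≤ n} ξ - ξ‖ ^ 2 = (F.diag_s13 ξ).real {ω | f ω ≤ n}ᶜ := by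
        intro n
        have h := F.op_union (hXm n) (hXm n).compl disjoint_compl_right
        rw [Set.union_compl_self, hFnorm] at h
        have h' := congrArg (fun T : K →L[ℂ] K => T ξ) h
        simp only [one_apply_eq_self, _root_.add_apply] at h'
        have h2 : F.op {ω | f ω ≤ n} ξ - ξ = - F.op {ω | f ω ≤ n}ᶜ ξ := by
          nth_rewrite 2 [h']; abel
        have h3 := F.norm_op_sq hFproj (hXm n).compl ξ
        rw [inner_self_eq_norm_sq_to_K] at h3
        rw [h2, norm_neg]
        exact Complex.ofReal_injective (by simpa using h3)
      simp only [e]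
      have := tendsto_measure_iInter_atTop (μ := F.diag_s13 ξ) (s := fun n : ℕ => {ω | f ω ≤ n}ᶜ)
        (fun n => (hXm n).compl.nullMeasurableSet)
        (fun a b hab ω hω hb => hω (le_trans (b := (a : ℝ)) hb (Nat.cast_le.2 hab)))
        ⟨0, measure_ne_top _ _⟩
      have hemp : ⋂ n : ℕ, {ω | f ω ≤ n}ᶜ = ∅ := by
        ext ω
        obtain ⟨n, hn⟩ := exists_nat_ge (f ω)
        simp only [Set.mem_iInter, Set.mem_empty_iff_false, iff_false, not_forall]
        exact ⟨n, fun h => h hn⟩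
      rw [hemp, measure_empty] at this
      simpa [measureReal_def, Function.comp_def] using (ENNReal.tendsto_toReal ENNReal.zero_ne_top).comp this
    have := (Real.continuous_sqrt.tendsto 0).comp hsq
    simpa [Function.comp_def] using this
  · have h0 := (F.op_op_of_disjoint hFproj hFnorm (hXm n) MeasurableSet.empty
      (Set.disjoint_empty _) ξ).1
    refine Integrable.mono' (integrable_const (n : ℝ)) hf.aestronglyMeasurable ?_
    have : ∀ᵐ ω ∂F.diag_s13 (F.op {ω | f ω ≤ n} ξ), ω ∈ {ω | f ω ≤ n} := h0
    filter_upwards [this] with ω hω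
    rw [Real.norm_of_nonneg (hpos ω)]
    exact hω

/-- Simple functions approximating `√f` pointwise approximate the spectral integral of `√f` on a
vector `η` with `∫ f dF_{η,η} < ∞`. They converge in norm by the isometry property; the limit is
identified by testing against the dense set of vectors `ξ` with `∫ f dF_{ξ,ξ} < ∞`, for which
`√f` is integrable against all measures in the polarization of `F_{ξ,η}`. -/
lemma POVM.spectral_limit (F : POVM Ω K)
    (hFproj : ∀ X : Set Ω, MeasurableSet X →
      ContinuousLinearMap.adjoint (F.op X) = F.op X ∧ (F.op X).comp (F.op X) = F.op X)
    (hFnorm : F.op Set.univ = 1) {f : Ω → ℝ} (hf : Measurable f) (hpos : ∀ ω, 0 ≤ f ω)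
    (s : ℕ → SimpleFunc Ω ℝ) (hs1 : ∀ n ω, |s n ω| ≤ 2 * √(f ω))
    (hs2 : ∀ ω, Tendsto (fun n => s n ω) atTop (nhds √(f ω)))
    {η : K} (hη : η ∈ F.formDomain f) {a : K}
    (ha : ∀ ξ : K, ⟪ξ, a⟫ = cmIntegral (F.cm ξ η) (fun ω => ((√(f ω) : ℝ) : ℂ))) :
    Tendsto (fun n => F.simpleInt (s n) η) atTop (nhds a) ∧
      ‖a‖ ^ 2 = ∫ ω, f ω ∂F.diag_s13 η := by
  have hgm : Measurable fun ω => √(f ω) := hf.sqrt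
  have hfint : Integrable f (F.diag_s13 η) := hη
  have hsq : ∀ ω, √(f ω) ^ 2 = f ω := fun ω => Real.sq_sqrt (hpos ω)
  have hg0 : ∀ ω, 0 ≤ √(f ω) := fun ω => Real.sqrt_nonneg _
  have herr : Tendsto (fun n => ∫ ω, (s n ω - √(f ω)) ^ 2 ∂F.diag_s13 η) atTop (nhds 0) := by
    have := tendsto_integral_of_dominated_convergence (μ := F.diag_s13 η)
      (F := fun n ω => (s n ω - √(f ω)) ^ 2) (f := fun _ => 0) (fun ω => 9 * f ω)
      (fun n => (((s n).measurable.sub hgm).pow_const 2).aestronglyMeasurable)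
      (hfint.const_mul 9)
      (fun n => Eventually.of_forall fun ω => by
        rw [Real.norm_of_nonneg (sq_nonneg _)]
        have h1 := abs_le.1 (hs1 n ω)
        nlinarith [hsq ω, hg0 ω])
      (Eventually.of_forall fun ω => by
        have h := ((hs2 ω).sub_const √(f ω)).pow 2
        simpa using h)
    simpa using this
  have hint : ∀ n, Integrable (fun ω => (s n ω - √(f ω)) ^ 2) (F.diag_s13 η) := fun n =>
    Integrable.mono' (hfint.const_mul 9)
      (((s n).measurable.sub hgm).pow_const 2).aestronglyMeasurable
      (Eventually.of_forall fun ω => by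
        rw [Real.norm_of_nonneg (sq_nonneg _)]
        have h1 := abs_le.1 (hs1 n ω)
        nlinarith [hsq ω, hg0 ω])
  have hcauchy : CauchySeq fun n => F.simpleInt (s n) η := by
    have hbound : ∀ n m, ‖F.simpleInt (s n) η - F.simpleInt (s m) η‖ ^ 2 ≤
        2 * (∫ ω, (s n ω - √(f ω)) ^ 2 ∂F.diag_s13 η) + 2 * ∫ ω, (s m ω - √(f ω)) ^ 2 ∂F.diag_s13 η := by
      intro n m
      rw [← F.simpleInt_sub_left, F.norm_simpleInt_sq hFproj hFnorm, ← integral_const_mul,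
        ← integral_const_mul, ← integral_add ((hint n).const_mul 2) ((hint m).const_mul 2)]
      refine integral_mono_of_nonneg (Eventually.of_forall fun ω => sq_nonneg _)
        (((hint n).const_mul 2).add ((hint m).const_mul 2)) (Eventually.of_forall fun ω => ?_)
      simp only [SimpleFunc.coe_sub, Pi.sub_apply]
      nlinarith [sq_nonneg ((s n ω - √(f ω)) + (s m ω - √(f ω)))]
    rw [Metric.cauchySeq_iff]
    intro ε hε
    obtain ⟨N, hN⟩ := eventually_atTop.1
      (herr.eventually (gt_mem_nhds (show 0 < ε ^ 2 / 4 by positivity)))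
    refine ⟨N, fun n hn m hm => ?_⟩
    rw [dist_eq_norm]
    refine lt_of_pow_lt_pow_left₀ 2 hε.le ?_
    linarith [hbound n m, hN n hn, hN m hm]
  obtain ⟨v, hv⟩ := cauchySeq_tendsto_of_complete hcauchy
  have hva : v = a := by
    refine (F.dense_formDomain hFproj hFnorm hf hpos).eq_of_inner_right ℂ fun ξ hξ => ?_
    have hξ' : ξ ∈ F.formDomain f := hξ
    -- on finite measures `√f` is integrable as soon as `f` is
    have hle : ∀ ζ ∈ F.formDomain f, ζ ∈ F.formDomain fun ω => √(f ω) := by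
      intro ζ hζ
      have hζ' : Integrable f (F.diag_s13 ζ) := hζ
      refine Integrable.mono' (hζ'.add (integrable_const 1)) hgm.aestronglyMeasurable
        (Eventually.of_forall fun ω => ?_)
      rw [Real.norm_of_nonneg (hg0 ω), Pi.add_apply]
      nlinarith [hsq ω, hg0 ω, sq_nonneg (√(f ω) - 1)]
    have hlim : ∀ ζ ∈ F.formDomain f, Tendsto (fun n => ((∫ ω, s n ω ∂F.diag_s13 ζ : ℝ) : ℂ)) atTop
        (nhds ((∫ ω, √(f ω) ∂F.diag_s13 ζ : ℝ) : ℂ)) := by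
      intro ζ hζ
      refine (Complex.continuous_ofReal.tendsto _).comp ?_
      refine tendsto_integral_of_dominated_convergence (fun ω => 2 * √(f ω))
        (fun n => (s n).measurable.aestronglyMeasurable) (Integrable.const_mul (hle ζ hζ) 2)
        (fun n => Eventually.of_forall fun ω => hs1 n ω)
        (Eventually.of_forall hs2)
    have hI : Complex.I • ξ ∈ F.formDomain f := (F.formDomain f).smul_mem _ hξ'
    have hpol : Tendsto (fun n => F.polar ξ η (s n)) atTop
        (nhds (F.polar ξ η fun ω => √(f ω))) :=
      ((hlim _ (add_mem hη hξ')).sub (hlim _ (sub_mem hη hξ'))).add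
        (((hlim _ (add_mem hη hI)).sub (hlim _ (sub_mem hη hI))).const_mul _)
    have h1 : Tendsto (fun n => 4 * ⟪ξ, F.simpleInt (s n) η⟫) atTop (nhds (4 * ⟪ξ, v⟫)) :=
      (tendsto_const_nhds.inner hv).const_mul 4
    simp only [F.inner_simpleInt] at h1
    have h2 := tendsto_nhds_unique h1 hpol
    rw [← F.cmIntegral_eq_polar_of_mem (hle ξ hξ') (hle η hη), ← ha ξ] at h2
    exact mul_left_cancel₀ (by norm_num : (4 : ℂ) ≠ 0) h2
  subst hva
  refine ⟨hv, ?_⟩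
  have h1 : Tendsto (fun n => ∫ ω, s n ω ^ 2 ∂F.diag_s13 η) atTop (nhds (∫ ω, f ω ∂F.diag_s13 η)) := by
    refine tendsto_integral_of_dominated_convergence (fun ω => 4 * f ω)
      (fun n => ((s n).measurable.pow_const 2).aestronglyMeasurable) (hfint.const_mul 4)
      (fun n => Eventually.of_forall fun ω => ?_) (Eventually.of_forall fun ω => ?_)
    · rw [Real.norm_of_nonneg (sq_nonneg _)]
      have h1 := abs_le.1 (hs1 n ω)
      nlinarith [hsq ω, hg0 ω]
    · have h := (hs2 ω).pow 2
      rwa [hsq ω] at h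
  simp only [← F.norm_simpleInt_sq hFproj hFnorm] at h1
  exact tendsto_nhds_unique (hv.norm.pow 2) h1

end Spectral

/-! ### Von Neumann's theorem on `A*A` -/

section VonNeumann

variable {H K : Type*} [NormedAddCommGroup H] [InnerProductSpace ℂ H] [CompleteSpace H]
  [NormedAddCommGroup K] [InnerProductSpace ℂ K] [CompleteSpace K]

/-- For a closed operator `A` with domain `D`, every `w` is `φ + A*Aφ` for some `φ`, in weak form:
`(φ, Aφ)` is the orthogonal projection of `(w, 0)` onto the graph of `A`. -/
lemma exists_one_add_adjoint_mul (D : Submodule ℂ H) (A : H → K)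
    (hadd : ∀ φ ∈ D, ∀ ψ ∈ D, A (φ + ψ) = A φ + A ψ)
    (hsmul : ∀ (c : ℂ), ∀ φ ∈ D, A (c • φ) = c • A φ)
    (hclosed : ∀ (u : ℕ → H) (φ : H) (χ : K), (∀ k, u k ∈ D) → Tendsto u atTop (nhds φ) →
      Tendsto (fun k => A (u k)) atTop (nhds χ) → φ ∈ D ∧ A φ = χ) (w : H) :
    ∃ φ ∈ D, ∀ ψ ∈ D, ⟪A ψ, A φ⟫ = ⟪ψ, w - φ⟫ := by
  let G : Submodule ℂ (WithLp 2 (H × K)) :=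
    { carrier := {p | p.fst ∈ D ∧ A p.fst = p.snd}
      zero_mem' := ⟨D.zero_mem, by simpa using hsmul 0 0 D.zero_mem⟩
      add_mem' := fun {p q} hp hq => ⟨D.add_mem hp.1 hq.1, by
        have := hadd _ hp.1 _ hq.1
        rw [hp.2, hq.2] at this
        exact this⟩
      smul_mem' := fun c p hp => ⟨D.smul_mem c hp.1, by
        have := hsmul c _ hp.1
        rw [hp.2] at this
        exact this⟩ }
  have hG : IsClosed (G : Set (WithLp 2 (H × K))) := by
    refine IsSeqClosed.isClosed fun u p hu hup => ?_
    have h1 : Tendsto (fun k => (u k).fst) atTop (nhds p.fst) :=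
      ((continuous_fst.comp (WithLp.prodContinuousLinearEquiv 2 ℂ H K).continuous).tendsto p).comp
        hup
    have h2 : Tendsto (fun k => (u k).snd) atTop (nhds p.snd) :=
      ((continuous_snd.comp (WithLp.prodContinuousLinearEquiv 2 ℂ H K).continuous).tendsto p).comp
        hup
    refine hclosed _ _ _ (fun k => (hu k).1) h1 ?_
    simpa only [fun k => (hu k).2] using h2
  have : CompleteSpace G := hG.completeSpace_coe
  obtain ⟨p, hp, q, hq, hpq⟩ := G.exists_add_mem_mem_orthogonal (WithLp.toLp 2 (w, (0 : K)))
  refine ⟨p.fst, hp.1, fun ψ hψ => ?_⟩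
  have h := (Submodule.mem_orthogonal G q).1 hq (WithLp.toLp 2 (ψ, A ψ)) ⟨hψ, rfl⟩
  have hq' : q = WithLp.toLp 2 (w, (0 : K)) - p := by rw [hpq]; abel
  rw [hq', WithLp.prod_inner_apply] at h
  simp only [WithLp.ofLp_sub, Prod.fst_sub, Prod.snd_sub, zero_sub, inner_neg_right] at h
  rw [hp.2]
  exact (add_neg_eq_zero.1 h).symm

/-- Von Neumann's theorem: for a densely defined closed operator `A` with domain `D`, the operator
`A*A` is densely defined, positive and selfadjoint. -/
lemma adjoint_mul_self_selfAdjoint (D : Submodule ℂ H) (hD : Dense (D : Set H)) (A : H → K)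
    (hadd : ∀ φ ∈ D, ∀ ψ ∈ D, A (φ + ψ) = A φ + A ψ)
    (hsmul : ∀ (c : ℂ), ∀ φ ∈ D, A (c • φ) = c • A φ)
    (hclosed : ∀ (u : ℕ → H) (φ : H) (χ : K), (∀ k, u k ∈ D) → Tendsto u atTop (nhds φ) →
      Tendsto (fun k => A (u k)) atTop (nhds χ) → φ ∈ D ∧ A φ = χ)
    (Dom : Set H)
    (hDom : Dom = {φ : H | φ ∈ D ∧ ∃ C : ℝ, ∀ ψ ∈ D, ‖(⟪A ψ, A φ⟫ : ℂ)‖ ≤ C * ‖ψ‖}) :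
    Dense Dom ∧ ∃ T : H → H,
      (∀ φ ∈ Dom, ∀ ψ ∈ D, ⟪ψ, T φ⟫ = ⟪A ψ, A φ⟫) ∧
      (∀ φ ∈ Dom, 0 ≤ (⟪φ, T φ⟫ : ℂ).re ∧ (⟪φ, T φ⟫ : ℂ).im = 0) ∧
      (∀ φ ∈ Dom, ∀ η ∈ Dom, ⟪T η, φ⟫ = ⟪η, T φ⟫) ∧
      (∀ η w : H, (∀ φ ∈ Dom, ⟪η, T φ⟫ = ⟪w, φ⟫) → η ∈ Dom ∧ T η = w) := by
  have hmem : ∀ φ, φ ∈ Dom ↔ φ ∈ D ∧ ∃ C : ℝ, ∀ ψ ∈ D, ‖(⟪A ψ, A φ⟫ : ℂ)‖ ≤ C * ‖ψ‖ := by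
    intro φ; rw [hDom]; rfl
  have hsub : ∀ φ ∈ Dom, φ ∈ D := fun φ h => ((hmem φ).1 h).1
  have hmk : ∀ φ ∈ D, ∀ v : H, (∀ ψ ∈ D, ⟪A ψ, A φ⟫ = ⟪ψ, v⟫) → φ ∈ Dom := by
    intro φ hφ v hv
    refine (hmem φ).2 ⟨hφ, ‖v‖, fun ψ hψ => ?_⟩
    rw [hv ψ hψ, mul_comm]
    exact norm_inner_le_norm _ _
  have hsolve := exists_one_add_adjoint_mul D A hadd hsmul hclosed
  have hT : ∀ φ : H, ∃ v : H, φ ∈ Dom → ∀ ψ ∈ D, ⟪ψ, v⟫ = ⟪A ψ, A φ⟫ := by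
    intro φ
    by_cases hφ : φ ∈ Dom
    · obtain ⟨-, C, hC⟩ := (hmem φ).1 hφ
      let l : D →ₗ[ℂ] ℂ :=
        { toFun := fun ψ => ⟪A φ, A ψ⟫
          map_add' := fun x y => by
            rw [Submodule.coe_add, hadd _ x.2 _ y.2, inner_add_right]
          map_smul' := fun c x => by
            rw [Submodule.coe_smul, hsmul c _ x.2, inner_smul_right]; rfl }
      obtain ⟨g, hg, -⟩ := exists_extension_norm_eq D (l.mkContinuous C fun x => by
        change ‖⟪A φ, A x⟫‖ ≤ _
        rw [norm_inner_symm]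
        exact hC x x.2)
      refine ⟨(InnerProductSpace.toDual ℂ H).symm g, fun _ ψ hψ => ?_⟩
      rw [← inner_conj_symm, InnerProductSpace.toDual_symm_apply, hg ⟨ψ, hψ⟩,
        ← inner_conj_symm (A ψ)]
      rfl
    · exact ⟨0, fun h => absurd h hφ⟩
  choose T hT using hT
  -- `u + Tu = w` is solvable in `Dom` for every `w`
  have hsurj : ∀ w : H, ∃ u ∈ Dom, T u = w - u := by
    intro w
    obtain ⟨u, hu, h⟩ := hsolve w
    have hu' := hmk u hu _ h
    refine ⟨u, hu', hD.eq_of_inner_right ℂ fun ψ hψ => ?_⟩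
    rw [hT u hu' ψ hψ, h ψ hψ]
  have hsymm : ∀ φ ∈ Dom, ∀ η ∈ Dom, ⟪T η, φ⟫ = ⟪η, T φ⟫ := by
    intro φ hφ η hη
    rw [← inner_conj_symm, hT η hη φ (hsub φ hφ), inner_conj_symm, hT φ hφ η (hsub η hη)]
  have hposT : ∀ φ ∈ Dom, ⟪φ, T φ⟫ = ((‖A φ‖ ^ 2 : ℝ) : ℂ) := by
    intro φ hφ
    rw [hT φ hφ φ (hsub φ hφ), inner_self_eq_norm_sq_to_K]
    simp
  refine ⟨?_, T, hT, fun φ hφ => ?_, hsymm, fun η w h => ?_⟩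
  · let S : Submodule ℂ H :=
      { carrier := Dom
        zero_mem' := hmk 0 D.zero_mem 0 fun ψ _ => by
          have : A 0 = 0 := by simpa using hsmul 0 0 D.zero_mem
          simp [this]
        add_mem' := fun {x y} hx hy => hmk _ (D.add_mem (hsub x hx) (hsub y hy)) (T x + T y)
          fun ψ hψ => by
            rw [hadd _ (hsub x hx) _ (hsub y hy), inner_add_right, inner_add_right,
              hT x hx ψ hψ, hT y hy ψ hψ]
        smul_mem' := fun c x hx => hmk _ (D.smul_mem c (hsub x hx)) (c • T x) fun ψ hψ => by
            rw [hsmul c _ (hsub x hx), inner_smul_right, inner_smul_right, hT x hx ψ hψ] }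
    change Dense (S : Set H)
    rw [Submodule.dense_iff_topologicalClosure_eq_top, Submodule.topologicalClosure_eq_top_iff,
      Submodule.eq_bot_iff]
    intro w hw
    obtain ⟨u, hu, hTu⟩ := hsurj w
    have h1 : ⟪u, w⟫ = 0 := (Submodule.mem_orthogonal S w).1 hw u hu
    have h2 : w = u + T u := by rw [hTu]; abel
    rw [h2, inner_add_right, hposT u hu, inner_self_eq_norm_sq_to_K] at h1
    have h3 : ‖u‖ ^ 2 + ‖A u‖ ^ 2 = 0 := Complex.ofReal_injective (by simpa using h1)
    have h4 : u = 0 := by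
      rw [← norm_eq_zero]
      nlinarith [sq_nonneg ‖u‖, sq_nonneg ‖A u‖]
    have h5 : T u = 0 := by
      refine hD.eq_of_inner_right ℂ fun ψ hψ => ?_
      have : A 0 = 0 := by simpa using hsmul 0 0 D.zero_mem
      rw [hT u hu ψ hψ, h4, this, inner_zero_right, inner_zero_right]
    rw [h2, h5, h4, add_zero]
  · rw [hposT φ hφ]
    exact ⟨by rw [Complex.ofReal_re]; positivity, Complex.ofReal_im _⟩
  · obtain ⟨u, hu, hTu⟩ := hsurj (η + w)
    have hηu : η = u := by
      refine ext_inner_right ℂ fun z => ?_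
      obtain ⟨φ, hφ, hTφ⟩ := hsurj z
      have hz : z = φ + T φ := by rw [hTφ]; abel
      have e : ⟪u, T φ⟫ = ⟪η + w - u, φ⟫ := by rw [← hTu, hsymm φ hφ u hu]
      rw [hz, inner_add_right, inner_add_right, h φ hφ, e, inner_sub_left, inner_add_left]
      ring
    subst hηu
    exact ⟨hu, by rw [hTu]; abel⟩

end VonNeumann

/-! ### The dilation -/

lemma diag_dilation {Ω : Type*} [MeasurableSpace Ω] {H K : Type*}
    [NormedAddCommGroup H] [InnerProductSpace ℂ H] [CompleteSpace H]
    [NormedAddCommGroup K] [InnerProductSpace ℂ K] [CompleteSpace K]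
    (E : POVM Ω H) (F : POVM Ω K) (V : H →L[ℂ] K)
    (hdil : ∀ X : Set Ω, MeasurableSet X →
      E.op X = (ContinuousLinearMap.adjoint V).comp ((F.op X).comp V)) (φ : H) :
    F.diag_s13 (V φ) = E.diag_s13 φ := by
  ext X hX
  rw [F.diag_apply_s13 _ hX, E.diag_apply_s13 _ hX, hdil X hX, ContinuousLinearMap.comp_apply,
    ContinuousLinearMap.adjoint_inner_right]
  rfl

/-- An operator `A` on the form domain of `f` with `‖Aφ‖² = ∫ f dE_{φ,φ}` is closed, by lower
semicontinuity of the right-hand side. -/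
lemma closed_of_norm_sq {Ω : Type*} [MeasurableSpace Ω] {H K : Type*}
    [NormedAddCommGroup H] [InnerProductSpace ℂ H]
    [NormedAddCommGroup K]
    (E : POVM Ω H) {f : Ω → ℝ} (hf : Measurable f) (hpos : ∀ ω, 0 ≤ f ω) (A : H → K)
    (hsub : ∀ φ ∈ E.formDomain f, ∀ ψ ∈ E.formDomain f, A (φ - ψ) = A φ - A ψ)
    (hnorm : ∀ φ ∈ E.formDomain f, ‖A φ‖ ^ 2 = ∫ ω, f ω ∂E.diag_s13 φ)
    (u : ℕ → H) (φ : H) (χ : K) (hu : ∀ k, u k ∈ E.formDomain f)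
    (huφ : Tendsto u atTop (nhds φ)) (hAu : Tendsto (fun k => A (u k)) atTop (nhds χ)) :
    φ ∈ E.formDomain f ∧ A φ = χ := by
  have hl : ∀ ζ ∈ E.formDomain f,
      ∫⁻ ω, ENNReal.ofReal (f ω) ∂E.diag_s13 ζ = ENNReal.ofReal (‖A ζ‖ ^ 2) := by
    intro ζ hζ
    rw [hnorm ζ hζ, ofReal_integral_eq_lintegral_ofReal hζ (Eventually.of_forall hpos)]
  have hcont : Continuous fun x : K => ENNReal.ofReal (‖x‖ ^ 2) :=
    ENNReal.continuous_ofReal.comp (continuous_norm.pow 2)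
  have hφ : φ ∈ E.formDomain f := by
    have h := E.lintegral_diag_le hf.ennreal_ofReal huφ ((hcont.tendsto χ).comp hAu)
      fun k => (hl _ (hu k)).le
    refine ⟨hf.aestronglyMeasurable, ?_⟩
    rw [hasFiniteIntegral_iff_ofReal (Eventually.of_forall hpos)]
    exact h.trans_lt ENNReal.ofReal_lt_top
  refine ⟨hφ, ?_⟩
  have hle : ∀ k, ‖A (u k) - A φ‖ ≤ ‖A (u k) - χ‖ := by
    intro k
    have h := E.lintegral_diag_le (u := fun l => u k - u l) hf.ennreal_ofReal
      (tendsto_const_nhds.sub huφ) ((hcont.tendsto (A (u k) - χ)).comp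
        (tendsto_const_nhds.sub hAu)) fun l => by
          rw [hl _ (sub_mem (hu k) (hu l)), hsub _ (hu k) _ (hu l)]; rfl
    rw [hl _ (sub_mem (hu k) hφ), hsub _ (hu k) _ hφ,
      ENNReal.ofReal_le_ofReal_iff (by positivity)] at h
    exact le_of_sq_le_sq h (norm_nonneg _)
  refine tendsto_nhds_unique (f := fun k => A (u k)) (l := atTop) ?_ hAu
  rw [tendsto_iff_norm_sub_tendsto_zero]
  exact squeeze_zero (fun k => norm_nonneg _) hle (tendsto_iff_norm_sub_tendsto_zero.1 hAu)

theorem stmt_13 {Ω : Type*} [MeasurableSpace Ω] {H K : Type*}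
    [NormedAddCommGroup H] [InnerProductSpace ℂ H] [CompleteSpace H]
    [NormedAddCommGroup K] [InnerProductSpace ℂ K] [CompleteSpace K]
    (E : POVM Ω H) (f : Ω → ℝ) (hf : Measurable f) (hpos : ∀ ω, 0 ≤ f ω)
    (hdense : Dense {φ : H | CMIntegrable (E.cm φ φ) (fun ω => (f ω : ℂ))})
    (F : POVM Ω K)
    (hFproj : ∀ X : Set Ω, MeasurableSet X →
      ContinuousLinearMap.adjoint (F.op X) = F.op X ∧ (F.op X).comp (F.op X) = F.op X)
    (hFnorm : F.op Set.univ = 1)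
    (V : H →L[ℂ] K)
    (hdil : ∀ X : Set Ω, MeasurableSet X →
      E.op X = (ContinuousLinearMap.adjoint V).comp ((F.op X).comp V))
    (A : H → K)
    (hA : ∀ φ ∈ {φ : H | CMIntegrable (E.cm φ φ) (fun ω => (f ω : ℂ))}, ∀ ξ : K,
      ⟪ξ, A φ⟫ = cmIntegral (F.cm ξ (V φ)) (fun ω => (Real.sqrt (f ω) : ℂ))) :
    let Ft : Set H := {φ : H | CMIntegrable (E.cm φ φ) (fun ω => (f ω : ℂ))}
    let DomT : Set H := {φ ∈ Ft | ∃ C : ℝ, ∀ ψ ∈ Ft,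
      ‖cmIntegral (E.cm ψ φ) (fun ω => (f ω : ℂ))‖ ≤ C * ‖ψ‖}
    -- `DomT` is exactly the domain of `A*A`
    (DomT = {φ ∈ Ft | ∃ C : ℝ, ∀ ψ ∈ Ft, ‖(⟪A ψ, A φ⟫ : ℂ)‖ ≤ C * ‖ψ‖}) ∧
    Dense DomT ∧
    ∃ T : H → H,
      -- T is the largest symmetric weak operator integral of f with respect to E
      (∀ φ ∈ DomT, ∀ ψ ∈ Ft, ⟪ψ, T φ⟫ = cmIntegral (E.cm ψ φ) (fun ω => (f ω : ℂ))) ∧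
      -- T = A*A
      (∀ φ ∈ DomT, ∀ ψ ∈ Ft, ⟪ψ, T φ⟫ = ⟪A ψ, A φ⟫) ∧
      -- T is positive
      (∀ φ ∈ DomT, 0 ≤ (⟪φ, T φ⟫ : ℂ).re ∧ (⟪φ, T φ⟫ : ℂ).im = 0) ∧
      -- T is symmetric
      (∀ φ ∈ DomT, ∀ η ∈ DomT, ⟪T η, φ⟫ = ⟪η, T φ⟫) ∧
      -- T is selfadjoint: every adjoint pair belongs to the graph of T
      (∀ η w : H, (∀ φ ∈ DomT, ⟪η, T φ⟫ = ⟪w, φ⟫) → η ∈ DomT ∧ T η = w) := by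
  intro Ft DomT
  have hFt : ∀ φ, φ ∈ Ft ↔ φ ∈ E.formDomain f := fun φ => E.cmIntegrable_iff φ f
  have hFtset : Ft = (E.formDomain f : Set H) := Set.ext hFt
  have hgm : Measurable fun ω => √(f ω) := hf.sqrt
  -- simple functions approximating `√f`, with `|s n| ≤ 2√f`
  let s : ℕ → SimpleFunc Ω ℝ := SimpleFunc.approxOn (fun ω => √(f ω)) hgm Set.univ 0 trivial
  have hs1 : ∀ n ω, |s n ω| ≤ 2 * √(f ω) := by
    intro n ω
    have h := SimpleFunc.norm_approxOn_zero_le hgm (s := Set.univ) trivial ω n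
    rw [Real.norm_eq_abs, Real.norm_of_nonneg (Real.sqrt_nonneg _)] at h
    linarith
  have hs2 : ∀ ω, Tendsto (fun n => s n ω) atTop (nhds √(f ω)) := fun ω =>
    SimpleFunc.tendsto_approxOn hgm (s := Set.univ) trivial (by simp)
  have hspec : ∀ φ ∈ E.formDomain f,
      Tendsto (fun n => F.simpleInt (s n) (V φ)) atTop (nhds (A φ)) ∧
        ‖A φ‖ ^ 2 = ∫ ω, f ω ∂E.diag_s13 φ := by
    intro φ hφ
    rw [← diag_dilation E F V hdil φ]
    refine F.spectral_limit hFproj hFnorm hf hpos s hs1 hs2 ?_ (hA φ ((hFt φ).2 hφ))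
    rw [POVM.mem_formDomain, diag_dilation E F V hdil φ]
    exact hφ
  have hadd : ∀ φ ∈ E.formDomain f, ∀ ψ ∈ E.formDomain f, A (φ + ψ) = A φ + A ψ := by
    intro φ hφ ψ hψ
    refine tendsto_nhds_unique (hspec _ (add_mem hφ hψ)).1 ?_
    simp only [map_add, F.simpleInt_add]
    exact (hspec φ hφ).1.add (hspec ψ hψ).1
  have hsmul : ∀ (c : ℂ), ∀ φ ∈ E.formDomain f, A (c • φ) = c • A φ := by
    intro c φ hφ
    refine tendsto_nhds_unique (hspec _ ((E.formDomain f).smul_mem c hφ)).1 ?_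
    simp only [map_smul, F.simpleInt_smul]
    exact (hspec φ hφ).1.const_smul c
  have hsub : ∀ φ ∈ E.formDomain f, ∀ ψ ∈ E.formDomain f, A (φ - ψ) = A φ - A ψ := by
    intro φ hφ ψ hψ
    have h := hadd _ (sub_mem hφ hψ) ψ hψ
    rw [sub_add_cancel] at h
    rw [h, add_sub_cancel_right]
  have hclosed := closed_of_norm_sq E hf hpos A hsub fun φ hφ => (hspec φ hφ).2
  have hform : ∀ φ ∈ Ft, ∀ ψ ∈ Ft,
      cmIntegral (E.cm ψ φ) (fun ω => (f ω : ℂ)) = ⟪A ψ, A φ⟫ := by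
    intro φ hφ ψ hψ
    have hφ' := (hFt φ).1 hφ
    have hψ' := (hFt ψ).1 hψ
    have hI : Complex.I • ψ ∈ E.formDomain f := (E.formDomain f).smul_mem _ hψ'
    refine mul_left_cancel₀ (by norm_num : (4 : ℂ) ≠ 0) ?_
    rw [E.cmIntegral_eq_polar_of_mem hψ' hφ', POVM.polar, ← (hspec _ (add_mem hφ' hψ')).2,
      ← (hspec _ (sub_mem hφ' hψ')).2, ← (hspec _ (add_mem hφ' hI)).2,
      ← (hspec _ (sub_mem hφ' hI)).2, hadd _ hφ' _ hψ', hsub _ hφ' _ hψ', hadd _ hφ' _ hI,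
      hsub _ hφ' _ hI, hsmul _ _ hψ']
    have hn : ∀ x : K, ((‖x‖ ^ 2 : ℝ) : ℂ) = ⟪x, x⟫ := fun x => by
      rw [inner_self_eq_norm_sq_to_K]; simp
    simp only [hn, inner_add_left, inner_add_right, inner_sub_left, inner_sub_right,
      inner_smul_left, inner_smul_right, Complex.conj_I]
    linear_combination (2 * ⟪A φ, A ψ⟫ - 2 * ⟪A ψ, A φ⟫) * Complex.I_sq
  have hDomT : DomT = {φ ∈ Ft | ∃ C : ℝ, ∀ ψ ∈ Ft, ‖(⟪A ψ, A φ⟫ : ℂ)‖ ≤ C * ‖ψ‖} := by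
    ext φ
    refine and_congr_right fun hφ => exists_congr fun C => forall₂_congr fun ψ hψ => ?_
    rw [hform φ hφ ψ hψ]
  have hDomT' : DomT = {φ : H | φ ∈ E.formDomain f ∧
      ∃ C : ℝ, ∀ ψ ∈ E.formDomain f, ‖(⟪A ψ, A φ⟫ : ℂ)‖ ≤ C * ‖ψ‖} := by
    rw [hDomT, hFtset]; rfl
  obtain ⟨hd, T, hT, hTpos, hTsymm, hTsa⟩ := adjoint_mul_self_selfAdjoint (E.formDomain f)
    (hFtset ▸ hdense) A hadd hsmul hclosed DomT hDomT'
  refine ⟨hDomT, hd, T, fun φ hφ ψ hψ => ?_, fun φ hφ ψ hψ => hT φ hφ ψ ((hFt ψ).1 hψ), hTpos,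
    hTsymm, hTsa⟩
  rw [hform φ hφ.1 ψ hψ, hT φ hφ ψ ((hFt ψ).1 hψ)]
end

section
/- Let H and K be complex Hilbert spaces, V : H → K an isometry (V*V = I), and S a selfadjoint operator in K. Let SV denote the operator from H to K with domain D := {φ ∈ H : Vφ ∈ dom(S)} and (SV)φ := S(Vφ), and assume D is dense in H. (a) If (SV)* equals the operator V*∘S from K to H (with domain dom(S), mapping ξ ↦ V*(Sξ)), then (SV)*(SV) equals the operator with domain {φ ∈ H : Vφ ∈ dom(S²)} mapping φ ↦ V*S²Vφ. (b) If S(dom(S) ∩ V(H)) ⊆ V(H), then (SV)*(SV) = B*B, where B is the operator in H with domain D mapping φ ↦ V*S(Vφ). -/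
/-!
Part (a) only unfolds both compositions: the hypothesis `(SV)* = V* S` identifies the domain and
the values of `(SV)*` at `S V φ`.

For part (b), invariance of `V(H)` gives `S V φ = V (B φ)` for `φ ∈ D`, and hence
`⟪S V φ, S V ψ⟫ = ⟪V (B φ), S V ψ⟫ = ⟪B φ, B ψ⟫` for `φ, ψ ∈ D`. So `S V φ` and `B φ` define the same
functional on `D` through `SV` and `B` respectively, and the two adjoints, which are determined by
these functionals, agree there (`mem_adjoint_iff_of_inner_eq`, `adjoint_eq_of_inner_eq`).
-/

open MeasureTheory ComplexConjugate
open scoped ComplexInnerProductSpace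

namespace LinearPMap

variable {E F G : Type*}
  [NormedAddCommGroup E] [InnerProductSpace ℂ E] [CompleteSpace E]
  [NormedAddCommGroup F] [InnerProductSpace ℂ F]
  [NormedAddCommGroup G] [InnerProductSpace ℂ G]

theorem mem_adjoint_of_inner_eq {T : E →ₗ.[ℂ] F} {R : E →ₗ.[ℂ] G}
    (hT : Dense (T.domain : Set E)) (hdom : R.domain = T.domain) {y : F} {z : G}
    (h : ∀ (x : E) (hx : x ∈ T.domain) (hx' : x ∈ R.domain), ⟪y, T ⟨x, hx⟩⟫ = ⟪z, R ⟨x, hx'⟩⟫)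
    (hy : y ∈ (adjoint T).domain) : z ∈ (adjoint R).domain := by
  refine mem_adjoint_domain_of_exists _ ⟨adjoint T ⟨y, hy⟩, fun x => ?_⟩
  have hx : (x : E) ∈ T.domain := hdom ▸ x.2
  rw [← h x hx x.2]
  exact adjoint_isFormalAdjoint hT ⟨y, hy⟩ ⟨x, hx⟩

theorem mem_adjoint_iff_of_inner_eq {T : E →ₗ.[ℂ] F} {R : E →ₗ.[ℂ] G}
    (hT : Dense (T.domain : Set E)) (hdom : R.domain = T.domain) {y : F} {z : G}
    (h : ∀ (x : E) (hx : x ∈ T.domain) (hx' : x ∈ R.domain), ⟪y, T ⟨x, hx⟩⟫ = ⟪z, R ⟨x, hx'⟩⟫) :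
    y ∈ (adjoint T).domain ↔ z ∈ (adjoint R).domain :=
  ⟨mem_adjoint_of_inner_eq hT hdom h,
    mem_adjoint_of_inner_eq (by rwa [hdom]) hdom.symm fun x hx hx' => (h x hx' hx).symm⟩

theorem adjoint_eq_of_inner_eq {T : E →ₗ.[ℂ] F} {R : E →ₗ.[ℂ] G}
    (hT : Dense (T.domain : Set E)) (hdom : R.domain = T.domain) {y : F} {z : G}
    (h : ∀ (x : E) (hx : x ∈ T.domain) (hx' : x ∈ R.domain), ⟪y, T ⟨x, hx⟩⟫ = ⟪z, R ⟨x, hx'⟩⟫)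
    (hy : y ∈ (adjoint T).domain) (hz : z ∈ (adjoint R).domain) :
    adjoint T ⟨y, hy⟩ = adjoint R ⟨z, hz⟩ := by
  refine adjoint_apply_eq hT _ fun x => ?_
  have hx : (x : E) ∈ R.domain := hdom.ge x.2
  have hR : Dense (R.domain : Set E) := by rwa [hdom]
  exact (adjoint_isFormalAdjoint hR ⟨z, hz⟩ ⟨x, hx⟩).trans (h x x.2 hx).symm

end LinearPMap

theorem stmt_14 {H K : Type*}
    [NormedAddCommGroup H] [InnerProductSpace ℂ H] [CompleteSpace H]
    [NormedAddCommGroup K] [InnerProductSpace ℂ K] [CompleteSpace K]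
    (V : H →L[ℂ] K) (hV : ∀ φ : H, ContinuousLinearMap.adjoint V (V φ) = φ)
    (S : K →ₗ.[ℂ] K) (hSdense : Dense (S.domain : Set K))
    (hSsa : LinearPMap.adjoint S = S)
    (SV : H →ₗ.[ℂ] K)
    (hSVdom : ∀ φ : H, φ ∈ SV.domain ↔ V φ ∈ S.domain)
    (hSVapply : ∀ (φ : H) (h : φ ∈ SV.domain), SV ⟨φ, h⟩ = S ⟨V φ, (hSVdom φ).1 h⟩)
    (hdense : Dense (SV.domain : Set H)) :
    -- (a)
    (((LinearPMap.adjoint SV).domain = S.domain ∧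
      ∀ (ξ : K) (h₁ : ξ ∈ (LinearPMap.adjoint SV).domain) (h₂ : ξ ∈ S.domain),
        LinearPMap.adjoint SV ⟨ξ, h₁⟩ = ContinuousLinearMap.adjoint V (S ⟨ξ, h₂⟩)) →
      ∀ φ : H,
        ((∃ h : φ ∈ SV.domain, SV ⟨φ, h⟩ ∈ (LinearPMap.adjoint SV).domain) ↔
          ∃ h : V φ ∈ S.domain, S ⟨V φ, h⟩ ∈ S.domain) ∧
        ∀ (h₁ : φ ∈ SV.domain) (h₂ : SV ⟨φ, h₁⟩ ∈ (LinearPMap.adjoint SV).domain)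
          (h₃ : V φ ∈ S.domain) (h₄ : S ⟨V φ, h₃⟩ ∈ S.domain),
          LinearPMap.adjoint SV ⟨SV ⟨φ, h₁⟩, h₂⟩ =
            ContinuousLinearMap.adjoint V (S ⟨S ⟨V φ, h₃⟩, h₄⟩)) ∧
    -- (b)
    ((∀ ξ : S.domain, (ξ : K) ∈ Set.range V → S ξ ∈ Set.range V) →
      ∀ (B : H →ₗ.[ℂ] H) (hBdom : B.domain = SV.domain),
        (∀ (φ : H) (hb : φ ∈ B.domain) (hs : φ ∈ SV.domain),
          B ⟨φ, hb⟩ = ContinuousLinearMap.adjoint V (SV ⟨φ, hs⟩)) →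
        ∀ φ : H,
          ((∃ h : φ ∈ SV.domain, SV ⟨φ, h⟩ ∈ (LinearPMap.adjoint SV).domain) ↔
            ∃ h : φ ∈ B.domain, B ⟨φ, h⟩ ∈ (LinearPMap.adjoint B).domain) ∧
          ∀ (h₁ : φ ∈ SV.domain) (h₂ : SV ⟨φ, h₁⟩ ∈ (LinearPMap.adjoint SV).domain)
            (h₃ : φ ∈ B.domain) (h₄ : B ⟨φ, h₃⟩ ∈ (LinearPMap.adjoint B).domain),
            LinearPMap.adjoint SV ⟨SV ⟨φ, h₁⟩, h₂⟩ =
              LinearPMap.adjoint B ⟨B ⟨φ, h₃⟩, h₄⟩) := by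
  refine ⟨?_, ?_⟩
  · rintro ⟨hdom, happ⟩ φ
    refine ⟨⟨?_, ?_⟩, ?_⟩
    · rintro ⟨h, h'⟩
      rw [hdom, hSVapply] at h'
      exact ⟨_, h'⟩
    · rintro ⟨h, h'⟩
      refine ⟨(hSVdom φ).2 h, ?_⟩
      rw [hdom, hSVapply]
      exact h'
    · intro h₁ h₂ h₃ h₄
      have h₅ : SV ⟨φ, h₁⟩ ∈ S.domain := hdom ▸ h₂
      rw [happ _ h₂ h₅]
      congr 3
      exact hSVapply φ h₁
  · intro hinv B hBdom hB φ
    have key : ∀ (h : φ ∈ SV.domain) (h' : φ ∈ B.domain) (x : H) (hx : x ∈ SV.domain)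
        (hx' : x ∈ B.domain), ⟪SV ⟨φ, h⟩, SV ⟨x, hx⟩⟫ = ⟪B ⟨φ, h'⟩, B ⟨x, hx'⟩⟫ := by
      intro h h' x hx hx'
      obtain ⟨u, hu⟩ := hinv ⟨V φ, (hSVdom φ).1 h⟩ ⟨φ, rfl⟩
      rw [← hSVapply φ h] at hu
      rw [hB φ h' h, hB x hx' hx, ← hu, hV, ContinuousLinearMap.adjoint_inner_right]
    refine ⟨⟨?_, ?_⟩, ?_⟩
    · rintro ⟨h, hm⟩
      have h' : φ ∈ B.domain := hBdom ▸ h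
      exact ⟨h', (LinearPMap.mem_adjoint_iff_of_inner_eq hdense hBdom (key h h')).1 hm⟩
    · rintro ⟨h', hm⟩
      have h : φ ∈ SV.domain := hBdom ▸ h'
      exact ⟨h, (LinearPMap.mem_adjoint_iff_of_inner_eq hdense hBdom (key h h')).2 hm⟩
    · intro h₁ h₂ h₃ h₄
      exact LinearPMap.adjoint_eq_of_inner_eq hdense hBdom (key h₁ h₃) h₂ h₄
end

section
/- Let ℓ > 0 and a, b ∈ ℂ, and define φ_{a,b} : [0,ℓ] → ℂ by φ_{a,b}(t) := ((b − a)/ℓ) t + a. Then the function x ↦ x·|(ℱφ_{a,b})(x)|² is Lebesgue integrable over ℝ if and only if a = b = 0. (Consequently, for the momentum POVM of a particle confined to [0,ℓ], no boundary-nonvanishing affine function belongs to the form domain of the first moment, so the weak first moment operator integral equals the minimal momentum operator P₀ rather than one of its selfadjoint extensions.) -/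
/-!
Write `c = (b - a) / ℓ`. For `x ≠ 0`, integrating explicitly gives
`√(2π) · x · (ℱφ)(x) = i (b e^{-ixℓ} - a) + (c / x) (e^{-ixℓ} - 1)`,
so `x |(ℱφ)(x)|²` behaves like `|b e^{-ixℓ} - a|² / (2π x)` up to an error of smaller order.
The oscillation is removed by a shift by the half period `T = π / ℓ`: it flips the sign of
`e^{-ixℓ}`, so by the parallelogram law the leading numerators at `x` and `x + T` add up to
`2 (|a|² + |b|²)`. Hence `(|a|² + |b|²) / x` is dominated on `(T, ∞)` by an integrable function
as soon as `x |(ℱφ)(x)|²` is integrable, and non-integrability of `1 / x` at infinity forces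
`a = b = 0`.
-/

open MeasureTheory ComplexConjugate intervalIntegral

/-- The Fourier transform of a function on `[0, ℓ]`:
`(ℱψ)(x) = (2π)^{-1/2} ∫₀^ℓ e^{-ixt} ψ(t) dt`. -/
noncomputable def Four (ℓ : ℝ) (ψ : ℝ → ℂ) (x : ℝ) : ℂ :=
  (1 / (Real.sqrt (2 * Real.pi) : ℂ)) *
    ∫ t in (0 : ℝ)..ℓ, Complex.exp (-(Complex.I * x * t)) * ψ t

/-- Closed form of the unnormalised Fourier transform of an affine function, multiplied by `x`. -/
lemma x_mul_integral_affine (ℓ : ℝ) (c a : ℂ) (x : ℝ) (hx : x ≠ 0) :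
    (x : ℂ) * ∫ t in (0 : ℝ)..ℓ, Complex.exp (-(Complex.I * x * t)) * (c * (t : ℂ) + a) =
      Complex.I * ((c * ℓ + a) * Complex.exp (-(Complex.I * x * ℓ)) - a) +
        c / x * (Complex.exp (-(Complex.I * x * ℓ)) - 1) := by
  have hx' : (x : ℂ) ≠ 0 := by exact_mod_cast hx
  have hder : ∀ t : ℝ, HasDerivAt
      (fun t : ℝ => Complex.exp (-(Complex.I * x * t)) *
        (Complex.I / x * (c * (t : ℂ) + a) + c / x ^ 2))
      (Complex.exp (-(Complex.I * x * t)) * (c * (t : ℂ) + a)) t := by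
    intro t
    have h0 : HasDerivAt (fun t : ℝ => (t : ℂ)) 1 t := Complex.ofRealCLM.hasDerivAt
    have h1 := ((h0.const_mul (Complex.I * x)).neg).cexp
    have h2 := (((h0.const_mul c).add_const a).const_mul (Complex.I / x)).add_const (c / x ^ 2)
    refine (h1.mul h2).congr_deriv ?_
    field_simp
    linear_combination (-(Complex.exp (-(Complex.I * x * t)) * (c * t + a) * x)) * Complex.I_sq
  rw [integral_eq_sub_of_hasDerivAt (fun t _ => hder t)
    (Continuous.intervalIntegrable (by fun_prop) _ _)]
  simp only [Complex.ofReal_zero, mul_zero, neg_zero, Complex.exp_zero]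
  field_simp
  ring

/-- The squared leading term is controlled by the squared transform, with an error `O(x⁻²)`. -/
lemma norm_sq_boundary_le (ℓ : ℝ) (hℓ : 0 < ℓ) (a b : ℂ) (x : ℝ) (hx : 0 < x) :
    ‖b * Complex.exp (-(Complex.I * x * ℓ)) - a‖ ^ 2 ≤
      2 * (2 * Real.pi * x ^ 2 *
        ‖Four ℓ (fun t : ℝ => ((b - a) / (ℓ : ℂ)) * (t : ℂ) + a) x‖ ^ 2) +
      2 * (2 * ‖(b - a) / (ℓ : ℂ)‖ / x) ^ 2 := by
  set c := (b - a) / (ℓ : ℂ) with hc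
  set e := Complex.exp (-(Complex.I * x * ℓ)) with he
  have hb : c * ℓ + a = b := by
    have : (ℓ : ℂ) ≠ 0 := by exact_mod_cast hℓ.ne'
    rw [hc]; field_simp; ring
  have key := x_mul_integral_affine ℓ c a x hx.ne'
  rw [hb, ← he] at key
  set J := ∫ t in (0 : ℝ)..ℓ, Complex.exp (-(Complex.I * x * t)) * (c * (t : ℂ) + a) with hJ
  have hF : 2 * Real.pi * x ^ 2 * ‖Four ℓ (fun t : ℝ => c * (t : ℂ) + a) x‖ ^ 2
      = ‖(x : ℂ) * J‖ ^ 2 := by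
    unfold Four
    rw [← hJ, norm_mul, norm_mul, mul_pow, mul_pow, norm_div, norm_one, Complex.norm_real,
      Complex.norm_real, div_pow, Real.norm_eq_abs, Real.norm_eq_abs, sq_abs, sq_abs,
      Real.sq_sqrt (by positivity)]
    field_simp
  have hee : ‖e‖ = 1 := by
    rw [he, Complex.norm_exp]; simp
  have hr : ‖c / x * (e - 1)‖ ≤ 2 * ‖c‖ / x := by
    have : ‖e - 1‖ ≤ 2 := by
      calc ‖e - 1‖ ≤ ‖e‖ + ‖(1 : ℂ)‖ := norm_sub_le _ _
        _ = 2 := by rw [hee, norm_one]; norm_num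
    rw [norm_mul, norm_div, Complex.norm_real, Real.norm_of_nonneg hx.le]
    calc ‖c‖ / x * ‖e - 1‖ ≤ ‖c‖ / x * 2 := by gcongr
      _ = _ := by ring
  have hu : ‖b * e - a‖ ≤ ‖(x : ℂ) * J‖ + 2 * ‖c‖ / x := by
    have : Complex.I * (b * e - a) = (x : ℂ) * J - c / x * (e - 1) := by rw [key]; ring
    calc ‖b * e - a‖ = ‖Complex.I * (b * e - a)‖ := by simp
      _ ≤ ‖(x : ℂ) * J‖ + ‖c / x * (e - 1)‖ := by rw [this]; exact norm_sub_le _ _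
      _ ≤ _ := by gcongr
  rw [hF]
  have h2 : ‖b * e - a‖ ^ 2 ≤ (‖(x : ℂ) * J‖ + 2 * ‖c‖ / x) ^ 2 := by gcongr
  nlinarith [sq_nonneg (‖(x : ℂ) * J‖ - 2 * ‖c‖ / x)]

theorem stmt_19 (ℓ : ℝ) (hℓ : 0 < ℓ) (a b : ℂ) :
    Integrable
      (fun x : ℝ => x * ‖Four ℓ (fun t : ℝ => ((b - a) / (ℓ : ℂ)) * (t : ℂ) + a) x‖ ^ 2)
      volume ↔
    a = 0 ∧ b = 0 := by
  constructor
  swap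
  · rintro ⟨rfl, rfl⟩
    simp [Four]
  intro hint
  set f : ℝ → ℝ := fun x => ‖Four ℓ (fun t : ℝ => ((b - a) / (ℓ : ℂ)) * (t : ℂ) + a) x‖ ^ 2
    with hf
  set T : ℝ := Real.pi / ℓ with hT
  have hT0 : 0 < T := by positivity
  set K : ℝ := 2 * ‖(b - a) / (ℓ : ℂ)‖ with hK
  set S : ℝ := ‖a‖ ^ 2 + ‖b‖ ^ 2 with hS
  have hf0 : ∀ x, 0 ≤ f x := fun x => by positivity
  have hbound : ∀ x : ℝ, T < x →
      S * x⁻¹ ≤ 2 * Real.pi * (x * f x) + 4 * Real.pi * ((x + T) * f (x + T))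
        + 2 * K ^ 2 * x ^ (-3 : ℝ) := by
    intro x hx
    have hx0 : 0 < x := hT0.trans hx
    have h1 := norm_sq_boundary_le ℓ hℓ a b x hx0
    have h2 := norm_sq_boundary_le ℓ hℓ a b (x + T) (by positivity)
    have hflip : Complex.exp (-(Complex.I * ((x + T : ℝ) : ℂ) * ℓ))
        = -Complex.exp (-(Complex.I * x * ℓ)) := by
      have hl : (ℓ : ℂ) ≠ 0 := by exact_mod_cast hℓ.ne'
      have : -(Complex.I * ((x + T : ℝ) : ℂ) * ℓ)
          = -(Complex.I * x * ℓ) - Real.pi * Complex.I := by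
        rw [hT]; push_cast; field_simp; ring
      rw [this, Complex.exp_sub, Complex.exp_pi_mul_I]
      ring
    rw [hflip] at h2
    set e := Complex.exp (-(Complex.I * x * ℓ)) with he
    have hee : ‖e‖ = 1 := by
      rw [he, Complex.norm_exp]; simp
    have hpar : ‖b * e - a‖ ^ 2 + ‖b * -e - a‖ ^ 2 = 2 * S := by
      have h := parallelogram_law_with_norm ℝ (b * e) a
      have h3 : ‖b * -e - a‖ = ‖b * e + a‖ := by
        rw [← norm_neg]; congr 1; ring
      have h4 : ‖b * e‖ = ‖b‖ := by rw [norm_mul, hee, mul_one]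
      rw [h4] at h
      rw [h3, hS]
      nlinarith
    have h1' : ‖b * e - a‖ ^ 2 ≤ 2 * (2 * Real.pi * x ^ 2 * f x) + 2 * (K / x) ^ 2 := h1
    have h2' : ‖b * -e - a‖ ^ 2 ≤
        2 * (2 * Real.pi * (x + T) ^ 2 * f (x + T)) + 2 * (K / (x + T)) ^ 2 := h2
    have hK2 : (K / (x + T)) ^ 2 ≤ (K / x) ^ 2 := by
      have : 0 ≤ K := by positivity
      gcongr
      linarith
    have hfT : (x + T) ^ 2 * f (x + T) ≤ 2 * x * ((x + T) * f (x + T)) := by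
      have : 0 ≤ (x + T) * f (x + T) := mul_nonneg (by positivity) (hf0 _)
      nlinarith
    have hfT' := mul_le_mul_of_nonneg_left hfT Real.pi_pos.le
    have hmain : S ≤ x * (2 * Real.pi * (x * f x) + 4 * Real.pi * ((x + T) * f (x + T)))
        + 2 * (K / x) ^ 2 := by
      nlinarith
    have h3 : x ^ (-3 : ℝ) = (x ^ 3)⁻¹ := by
      rw [Real.rpow_neg hx0.le]; norm_cast
    rw [h3]
    calc S * x⁻¹ ≤ (x * (2 * Real.pi * (x * f x) + 4 * Real.pi * ((x + T) * f (x + T)))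
        + 2 * (K / x) ^ 2) * x⁻¹ := by gcongr
      _ = _ := by field_simp
  have hdom : IntegrableOn (fun x : ℝ => 2 * Real.pi * (x * f x)
      + 4 * Real.pi * ((x + T) * f (x + T)) + 2 * K ^ 2 * x ^ (-3 : ℝ)) (Set.Ioi T) := by
    refine ((hint.const_mul _).integrableOn.add
      ((hint.comp_add_right T).const_mul _).integrableOn).add ?_
    exact (integrableOn_Ioi_rpow_of_lt (by norm_num) hT0).const_mul _
  have hSint : IntegrableOn (fun x : ℝ => S * x⁻¹) (Set.Ioi T) := by
    refine Integrable.mono' hdom (by fun_prop) ?_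
    filter_upwards [ae_restrict_mem measurableSet_Ioi] with x hx
    have hx0 : 0 < x := hT0.trans hx
    rw [Real.norm_of_nonneg (by positivity)]
    exact hbound x hx
  have hS0 : S = 0 := by
    by_contra hne
    refine not_integrableOn_Ioi_inv (a := T) ?_
    refine (hSint.const_mul S⁻¹).congr (Filter.Eventually.of_forall fun x => ?_)
    simp [hne]
  have ha : ‖a‖ ^ 2 = 0 := by nlinarith [sq_nonneg ‖a‖, sq_nonneg ‖b‖]
  have hb : ‖b‖ ^ 2 = 0 := by nlinarith [sq_nonneg ‖a‖, sq_nonneg ‖b‖]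
  simpa using And.intro ha hb
end
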